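/- arXiv:1409.7366 — 3 statements merged into one kernel-verified Lean document; each statement's English description precedes it below -/
import Mathlib

section
/- For all x > 0, the Mittag-Leffler function E_β(-x) satisfies 1/(1 + Γ(1-β)x) ≤ E_β(-x) ≤ 1/(1 + x/Γ(1+β)). -/
open MeasureTheory Real Set

/-- The Mittag-Leffler function `E_β(x) = ∑_{k≥0} x^k / Γ(1+βk)`. -/
noncomputable def mittagLeffler (β x : ℝ) : ℝ := ∑' k : ℕ, x ^ k / Real.Gamma (1 + β * k)


/-- Two-parameter Mittag-Leffler function at `-y`. -/
noncomputable def mlG (β c y : ℝ) : ℝ := ∑' k : ℕ, (-y) ^ k / Real.Gamma (c + β * k)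

lemma ml_gamma_lower (A s : ℝ) (hA : 0 < A) (hs : 0 < s) :
    A ^ s * (Real.exp (-(A+1)) / (A+1)) ≤ Real.Gamma s := by
  rw [Real.Gamma_eq_integral hs]
  have hsub : Icc A (A+1) ⊆ Ioi (0:ℝ) := fun x hx => lt_of_lt_of_le hA hx.1
  have hint := Real.GammaIntegral_convergent hs
  have h1 : ∫ x in Icc A (A+1), Real.exp (-x) * x ^ (s-1) ≤
      ∫ x in Ioi (0:ℝ), Real.exp (-x) * x ^ (s-1) := by
    apply setIntegral_mono_set hint
    · filter_upwards [ae_restrict_mem measurableSet_Ioi] with x hx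
      have : (0:ℝ) < x := hx
      positivity
    · exact hsub.eventuallyLE
  refine le_trans ?_ h1
  have h2 : ∫ x in Icc A (A+1), (A ^ s * (Real.exp (-(A+1)) / (A+1))) ≤
      ∫ x in Icc A (A+1), Real.exp (-x) * x ^ (s-1) := by
    apply setIntegral_mono_on _ (hint.mono_set hsub) measurableSet_Icc
    · intro x hx
      have hx0 : 0 < x := lt_of_lt_of_le hA hx.1
      rw [Real.rpow_sub hx0, Real.rpow_one]
      have e1 : Real.exp (-(A+1)) ≤ Real.exp (-x) := Real.exp_le_exp.2 (by linarith [hx.2])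
      have e2 : A ^ s ≤ x ^ s := Real.rpow_le_rpow hA.le hx.1 hs.le
      have e3 : A ^ s / (A+1) ≤ x ^ s / x := by
        gcongr
        exact hx.2
      calc A ^ s * (Real.exp (-(A+1)) / (A+1)) = Real.exp (-(A+1)) * (A ^ s / (A+1)) := by ring
        _ ≤ _ := by gcongr
    · exact (integrableOn_const (by simp))
  refine le_trans (le_of_eq ?_) h2
  simp

lemma ml_summable (β c T : ℝ) (hβ : 0 < β) (hc : 0 < c) (hT : 0 ≤ T) :
    Summable fun k : ℕ => T ^ k / Real.Gamma (c + β * k) := by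
  -- choose A with A^β = 2 (T+1)
  set A : ℝ := (2 * (T + 1)) ^ (1/β) with hA
  have hA0 : 0 < A := by positivity
  have hAβ : A ^ β = 2 * (T+1) := by
    rw [hA, ← Real.rpow_mul (by positivity), one_div, inv_mul_cancel₀ hβ.ne', Real.rpow_one]
  have hD : 0 < Real.exp (-(A+1)) / (A+1) := by positivity
  set D := Real.exp (-(A+1)) / (A+1)
  refine Summable.of_nonneg_of_le (f := fun k : ℕ => (A ^ c * D)⁻¹ * (1/2 : ℝ) ^ k) ?_ ?_ ?_
  · intro k
    have : 0 < Real.Gamma (c + β * k) := Real.Gamma_pos_of_pos (by positivity)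
    positivity
  · intro k
    have hG : 0 < Real.Gamma (c + β * k) := Real.Gamma_pos_of_pos (by positivity)
    have h := ml_gamma_lower A (c + β * k) hA0 (by positivity)
    rw [Real.rpow_add hA0, Real.rpow_mul hA0.le, hAβ, Real.rpow_natCast] at h
    rw [div_le_iff₀ hG]
    have h2 : (A ^ c * D)⁻¹ * (1/2 : ℝ) ^ k * (A ^ c * (2 * (T+1)) ^ k * D) ≤
      (A ^ c * D)⁻¹ * (1/2 : ℝ) ^ k * Real.Gamma (c + β * k) := by gcongr
    refine le_trans ?_ h2
    have h3 : (A ^ c * D)⁻¹ * (1/2 : ℝ) ^ k * (A ^ c * (2 * (T+1)) ^ k * D) = (T+1)^k := by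
      rw [mul_pow]
      have : (1/2:ℝ)^k * 2^k = 1 := by rw [← mul_pow]; norm_num
      have hAc : 0 < A ^ c := by positivity
      field_simp
      exact this
    rw [h3]
    gcongr
    linarith
  · exact (summable_geometric_two).mul_left _

lemma mlG_continuous (β c : ℝ) (hβ : 0 < β) (hc : 0 < c) : Continuous (mlG β c) := by
  rw [continuous_iff_continuousAt]
  intro y
  have : ContinuousOn (mlG β c) (Ioo (-(|y|+1)) (|y|+1)) := by
    unfold mlG
    refine continuousOn_tsum (u := fun k : ℕ => (|y|+1) ^ k / Real.Gamma (c + β * k)) ?_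
      (ml_summable β c _ hβ hc (by positivity)) ?_
    · intro k; fun_prop
    · intro k x hx
      have hG : 0 < Real.Gamma (c + β * k) := Real.Gamma_pos_of_pos (by positivity)
      rw [norm_div, norm_pow, norm_neg, Real.norm_of_nonneg hG.le]
      gcongr
      exact (abs_lt.2 hx).le
  refine this.continuousAt (Ioo_mem_nhds ?_ ?_)
  · linarith [neg_abs_le y]
  · linarith [le_abs_self y]

lemma mlG_summable (β c y : ℝ) (hβ : 0 < β) (hc : 0 < c) :
    Summable fun k : ℕ => (-y) ^ k / Real.Gamma (c + β * k) := by
  refine Summable.of_norm_bounded (ml_summable β c |y| hβ hc (abs_nonneg y)) ?_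
  intro k
  have hG : 0 < Real.Gamma (c + β * k) := Real.Gamma_pos_of_pos (by positivity)
  rw [norm_div, norm_pow, norm_neg, Real.norm_of_nonneg hG.le, Real.norm_eq_abs]

lemma mlG_rec (β c y : ℝ) (hβ : 0 < β) (hc : 0 < c) :
    mlG β c y = 1 / Real.Gamma c - y * mlG β (c + β) y := by
  unfold mlG
  rw [(mlG_summable β c y hβ hc).tsum_eq_zero_add, ← tsum_mul_left, sub_eq_add_neg, ← tsum_neg]
  congr 1
  · simp
  · congr 1
    ext k
    push_cast
    rw [show c + β * (k + 1) = c + β + β * k by ring]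
    ring

lemma ml_beta (a b t : ℝ) (ha : 0 < a) (hb : 0 < b) (ht : 0 < t) :
    ∫ s in (0:ℝ)..t, (t - s) ^ (a-1) * s ^ (b-1) =
      t ^ (a+b-1) * (Real.Gamma a * Real.Gamma b / Real.Gamma (a+b)) := by
  have h := Complex.betaIntegral_scaled (b:ℂ) (a:ℂ) ht
  rw [Complex.betaIntegral_eq_Gamma_mul_div _ _ (by simpa) (by simpa)] at h
  have h2 : ∫ x in (0:ℝ)..t, (x : ℂ) ^ ((b:ℂ) - 1) * ((t : ℂ) - x) ^ ((a:ℂ) - 1) =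
     ∫ x in (0:ℝ)..t, (((t - x) ^ (a-1) * x ^ (b-1) : ℝ) : ℂ) := by
    apply intervalIntegral.integral_congr
    intro x hx
    rw [uIcc_of_le ht.le] at hx
    simp only
    push_cast
    rw [Complex.ofReal_cpow (by linarith [hx.2]), Complex.ofReal_cpow hx.1]
    push_cast
    ring
  rw [h2, intervalIntegral.integral_ofReal, ← Complex.ofReal_add, Complex.Gamma_ofReal,
    Complex.Gamma_ofReal, Complex.Gamma_ofReal, ← Complex.ofReal_one, ← Complex.ofReal_sub,
    ← Complex.ofReal_cpow ht.le] at h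
  have h3 : ∫ s in (0:ℝ)..t, (t - s) ^ (a-1) * s ^ (b-1) = t ^ (b+a-1) *
    (Real.Gamma b * Real.Gamma a / Real.Gamma (b+a)) := by exact_mod_cast h
  rw [h3, add_comm b a, mul_comm (Real.Gamma b)]

lemma ml_beta_int (a b t : ℝ) (ha : 0 < a) (hb : 0 < b) (ht : 0 < t) :
    IntervalIntegrable (fun s => (t - s) ^ (a-1) * s ^ (b-1)) volume 0 t := by
  by_contra hn
  have h := ml_beta a b t ha hb ht
  rw [intervalIntegral.integral_undef hn] at h
  have := Real.Gamma_pos_of_pos ha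
  have := Real.Gamma_pos_of_pos hb
  have := Real.Gamma_pos_of_pos (add_pos ha hb)
  have : 0 < t ^ (a+b-1) * (Real.Gamma a * Real.Gamma b / Real.Gamma (a+b)) := by positivity
  linarith

lemma ml_cont_rpow (β c : ℝ) (hβ : 0 < β) (hc : 0 < c) :
    Continuous (fun s : ℝ => mlG β c (s ^ β)) :=
  (mlG_continuous β c hβ hc).comp (Real.continuous_rpow_const hβ.le)

lemma ml_conv_int (β a c t : ℝ) (hβ : 0 < β) (ha : 0 < a) (hc : 0 < c) (ht : 0 < t) :
    IntervalIntegrable (fun s => (t - s) ^ (a-1) * (s ^ (c-1) * mlG β c (s ^ β))) volume 0 t := by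
  have := (ml_beta_int a c t ha hc ht).mul_continuousOn (ml_cont_rpow β c hβ hc).continuousOn
  simpa only [mul_assoc] using this

lemma ml_conv (β a c t : ℝ) (hβ : 0 < β) (ha : 0 < a) (hc : 0 < c) (ht : 0 < t) :
    ∫ s in (0:ℝ)..t, (t - s) ^ (a-1) * (s ^ (c-1) * mlG β c (s ^ β)) =
      Real.Gamma a * (t ^ (a+c-1) * mlG β (a+c) (t ^ β)) := by
  have hGa := Real.Gamma_pos_of_pos ha
  have hG : ∀ k : ℕ, 0 < Real.Gamma (c + β * k) := fun k =>
    Real.Gamma_pos_of_pos (by positivity)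
  have hG2 : ∀ k : ℕ, 0 < Real.Gamma (a + c + β * k) := fun k =>
    Real.Gamma_pos_of_pos (by positivity)
  let F : ℕ → ℝ → ℝ := fun k s =>
    ((-1) ^ k / Real.Gamma (c + β * k)) * ((t - s) ^ (a-1) * s ^ ((c + β * k)-1))
  have hexp : ∀ k : ℕ, t ^ (a + (c + β * k) - 1) = t ^ (a+c-1) * (t ^ β) ^ k := by
    intro k
    rw [← Real.rpow_natCast, ← Real.rpow_mul ht.le, ← Real.rpow_add ht]
    congr 1; ring
  have hFi : ∀ k, Integrable (F k) (volume.restrict (Ioc 0 t)) := by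
    intro k
    have := (ml_beta_int a (c + β * k) t ha (by positivity) ht).const_mul
      ((-1) ^ k / Real.Gamma (c + β * k))
    exact (intervalIntegrable_iff_integrableOn_Ioc_of_le ht.le).1 this
  have hFv : ∀ k : ℕ, ∫ s in Ioc 0 t, (t - s) ^ (a-1) * s ^ ((c + β * k)-1) =
      t ^ (a+c-1) * (t ^ β) ^ k *
        (Real.Gamma a * Real.Gamma (c + β * k) / Real.Gamma (a + c + β * k)) := by
    intro k
    rw [← intervalIntegral.integral_of_le ht.le, ml_beta a (c + β * k) t ha (by positivity) ht,
      hexp, add_assoc a c]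
  have hFn : ∀ k, ∫ s in Ioc 0 t, ‖F k s‖ =
      (Real.Gamma a * t ^ (a+c-1)) * ((t ^ β) ^ k / Real.Gamma (a + c + β * k)) := by
    intro k
    have : ∫ s in Ioc 0 t, ‖F k s‖ = ∫ s in Ioc 0 t, (1 / Real.Gamma (c + β * k)) *
        ((t - s) ^ (a-1) * s ^ ((c + β * k)-1)) := by
      apply setIntegral_congr_fun measurableSet_Ioc
      intro s hs
      have h1 : 0 ≤ t - s := by linarith [hs.2]
      have h2 : 0 ≤ s := hs.1.le
      simp only [F]
      rw [norm_mul, norm_div, norm_pow, norm_neg, norm_one, one_pow,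
        Real.norm_of_nonneg (hG k).le, Real.norm_of_nonneg (by positivity)]
    rw [this, integral_const_mul, hFv]
    have := (hG k).ne'
    field_simp
  have key := hasSum_integral_of_summable_integral_norm hFi (by
    simp_rw [hFn]
    exact (ml_summable β (a+c) (t ^ β) hβ (by positivity) (by positivity)).mul_left _)
  have hFs : ∫ s in Ioc 0 t, ∑' k, F k s =
      ∫ s in (0:ℝ)..t, (t - s) ^ (a-1) * (s ^ (c-1) * mlG β c (s ^ β)) := by
    rw [intervalIntegral.integral_of_le ht.le]
    apply setIntegral_congr_fun measurableSet_Ioc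
    intro s hs
    simp only [F, mlG]
    rw [← tsum_mul_left, ← tsum_mul_left]
    congr 1
    ext k
    have : s ^ (c + β * k - 1) = s ^ (c - 1) * (s ^ β) ^ k := by
      rw [← Real.rpow_natCast, ← Real.rpow_mul hs.1.le, ← Real.rpow_add hs.1]
      congr 1; ring
    rw [this, neg_pow]
    ring
  rw [← hFs, ← key.tsum_eq]
  unfold mlG
  rw [← tsum_mul_left, ← tsum_mul_left]
  congr 1
  ext k
  simp only [F]
  rw [integral_const_mul, hFv, neg_pow (t ^ β)]
  have := (hG k).ne'
  field_simp

/-- The resolvent kernel. -/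
noncomputable def mlf (β t : ℝ) : ℝ := t ^ (β - 1) * mlG β β (t ^ β)

lemma mlf_volterra (β t : ℝ) (hβ : 0 < β) (ht : 0 < t) :
    ∫ s in (0:ℝ)..t, (t - s) ^ (β-1) * mlf β s = t ^ (β-1) - Real.Gamma β * mlf β t := by
  have h := ml_conv β β β t hβ hβ hβ ht
  have hG := Real.Gamma_pos_of_pos hβ
  unfold mlf
  rw [h, mlG_rec β β _ hβ hβ]
  have : t ^ (β + β - 1) = t ^ (β - 1) * t ^ β := by
    rw [← Real.rpow_add ht]; congr 1; ring
  rw [this]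
  field_simp
  ring

lemma mlf_conv_int (β a t : ℝ) (hβ : 0 < β) (ha : 0 < a) (ht : 0 < t) :
    IntervalIntegrable (fun s => (t - s) ^ (a-1) * mlf β s) volume 0 t :=
  ml_conv_int β a β t hβ ha hβ ht

lemma ml_ker_int (β t t1 : ℝ) (hβ : 0 < β) :
    IntervalIntegrable (fun s => (t - s) ^ (β-1)) volume t1 t := by
  have h : IntervalIntegrable (fun x : ℝ => x ^ (β-1)) volume (t - t1) (t - t) :=
    intervalIntegral.intervalIntegrable_rpow' (by linarith)
  have := h.comp_sub_left t
  simpa using this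

lemma ml_ker_integral (β t t1 : ℝ) (hβ : 0 < β) :
    ∫ s in t1..t, (t - s) ^ (β-1) = (t - t1) ^ β / β := by
  rw [intervalIntegral.integral_comp_sub_left (fun x : ℝ => x ^ (β-1)) t,
    integral_rpow (Or.inl (by linarith))]
  simp [Real.zero_rpow hβ.ne']

lemma mlf_no_first_zero (β t0 : ℝ) (hβ : 0 < β) (hβ1 : β < 1) (ht0 : 0 < t0)
    (hpos : ∀ s, 0 < s → s < t0 → 0 < mlf β s) : 0 < mlf β t0 := by
  by_contra hneg
  push Not at hneg
  have hG := Real.Gamma_pos_of_pos hβ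
  set δ : ℝ := min (t0/2) ((β * Real.Gamma β / 4) ^ (1/β)) with hδ
  have hδ0 : 0 < δ := by positivity
  have hδ1 : δ ≤ t0/2 := min_le_left _ _
  have hδ2 : δ ^ β ≤ β * Real.Gamma β / 4 := by
    calc δ ^ β ≤ ((β * Real.Gamma β / 4) ^ (1/β)) ^ β :=
          Real.rpow_le_rpow hδ0.le (min_le_right _ _) hβ.le
      _ = _ := by
        rw [← Real.rpow_mul (by positivity), one_div, inv_mul_cancel₀ hβ.ne', Real.rpow_one]
  have hcont : ContinuousOn (mlf β) (Icc (t0 - δ) t0) := by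
    unfold mlf
    refine ContinuousOn.mul ?_ (ml_cont_rpow β β hβ hβ).continuousOn
    refine ContinuousOn.rpow_const continuousOn_id ?_
    intro x hx
    left
    have := hx.1
    linarith
  obtain ⟨t1, ht1, hmax⟩ := isCompact_Icc.exists_isMaxOn
    (nonempty_Icc.2 (by linarith : t0 - δ ≤ t0)) hcont
  have hf1 : 0 < mlf β t1 :=
    lt_of_lt_of_le (hpos (t0 - δ) (by linarith) (by linarith))
      (hmax (left_mem_Icc.2 (by linarith)))
  have ht1lt : t1 < t0 := by
    rcases lt_or_eq_of_le ht1.2 with h | h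
    · exact h
    · rw [h] at hf1; linarith
  have ht1pos : 0 < t1 := by linarith [ht1.1]
  set r : ℝ := (t0/t1) ^ (β-1) with hr
  have hrt : r * t1 ^ (β-1) = t0 ^ (β-1) := by
    rw [hr, Real.div_rpow ht0.le ht1pos.le]
    have : 0 < t1 ^ (β-1) := by positivity
    field_simp
  have hr0 : 0 < r := by positivity
  have hr2 : 1/2 ≤ r := by
    have h1 : r = (t1/t0) ^ (1-β) := by
      rw [hr, show β - 1 = -(1-β) by ring, Real.rpow_neg (by positivity),
        ← Real.inv_rpow (by positivity), inv_div]
    have h2 : t1/t0 ≤ (t1/t0) ^ (1-β) :=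
      Real.self_le_rpow_of_le_one (by positivity) ((div_le_one ht0).2 ht1lt.le) (by linarith)
    have h3 : 1/2 ≤ t1/t0 := by
      rw [le_div_iff₀ ht0]; linarith [ht1.1]
    linarith
  have hint0 := mlf_conv_int β β t0 hβ hβ ht0
  have hintA : IntervalIntegrable (fun s => (t0 - s) ^ (β-1) * mlf β s) volume 0 t1 :=
    hint0.mono_set (by
      rw [uIcc_of_le ht0.le, uIcc_of_le ht1pos.le]; exact Icc_subset_Icc_right ht1lt.le)
  have hintB : IntervalIntegrable (fun s => (t0 - s) ^ (β-1) * mlf β s) volume t1 t0 :=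
    hint0.mono_set (by
      rw [uIcc_of_le ht0.le, uIcc_of_le ht1lt.le]; exact Icc_subset_Icc_left ht1pos.le)
  have hint1 := mlf_conv_int β β t1 hβ hβ ht1pos
  have hA : ∫ s in (0:ℝ)..t1, (t0 - s) ^ (β-1) * mlf β s ≤
      r * (t1 ^ (β-1) - Real.Gamma β * mlf β t1) := by
    rw [← mlf_volterra β t1 hβ ht1pos, ← intervalIntegral.integral_const_mul]
    apply intervalIntegral.integral_mono_on_of_le_Ioo ht1pos.le hintA (hint1.const_mul r)
    intro s hs
    have hfs := hpos s hs.1 (by linarith [hs.2])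
    rw [← mul_assoc]
    apply mul_le_mul_of_nonneg_right _ hfs.le
    have h1 : 0 < t1 - s := by linarith [hs.2]
    have h0 : 0 < t0 - s := by linarith
    have hq : t0/t1 ≤ (t0-s)/(t1-s) := by
      rw [div_le_div_iff₀ ht1pos h1]
      nlinarith [hs.1]
    have := Real.rpow_le_rpow_of_nonpos (by positivity) hq (by linarith : β - 1 ≤ 0)
    rw [Real.div_rpow h0.le h1.le, div_le_iff₀ (by positivity)] at this
    exact this
  have hB : ∫ s in t1..t0, (t0 - s) ^ (β-1) * mlf β s ≤ ((t0 - t1) ^ β / β) * mlf β t1 := by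
    rw [← ml_ker_integral β t0 t1 hβ, ← intervalIntegral.integral_mul_const]
    apply intervalIntegral.integral_mono_on_of_le_Ioo ht1lt.le hintB
      ((ml_ker_int β t0 t1 hβ).mul_const _)
    intro s hs
    have h0 : 0 < t0 - s := by linarith [hs.2]
    apply mul_le_mul_of_nonneg_left _ (by positivity)
    exact hmax ⟨by linarith [ht1.1, hs.1], hs.2.le⟩
  have hV := mlf_volterra β t0 hβ ht0
  rw [← intervalIntegral.integral_add_adjacent_intervals hintA hintB] at hV
  have hpow : (t0 - t1) ^ β / β ≤ Real.Gamma β / 4 := by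
    rw [div_le_iff₀ hβ]
    have : (t0 - t1) ^ β ≤ δ ^ β :=
      Real.rpow_le_rpow (by linarith) (by linarith [ht1.1]) hβ.le
    linarith
  have e1 : (t0 - t1) ^ β / β * mlf β t1 ≤ Real.Gamma β / 4 * mlf β t1 := by gcongr
  have e2 : 1/2 * (Real.Gamma β * mlf β t1) ≤ r * (Real.Gamma β * mlf β t1) := by gcongr
  have e3 : 0 < Real.Gamma β * mlf β t1 := by positivity
  have e4 : Real.Gamma β * mlf β t0 ≤ 0 := mul_nonpos_of_nonneg_of_nonpos hG.le hneg
  rw [mul_sub, hrt] at hA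
  linarith

lemma mlf_pos (β t : ℝ) (hβ : 0 < β) (hβ1 : β < 1) (ht : 0 < t) : 0 < mlf β t := by
  have hcont := ml_cont_rpow β β hβ hβ
  have hsign : ∀ s : ℝ, 0 < s → (0 < mlf β s ↔ 0 < mlG β β (s ^ β)) := by
    intro s hs
    unfold mlf
    exact mul_pos_iff_of_pos_left (by positivity)
  by_contra hneg
  set S : Set ℝ := {s | 0 ≤ s ∧ mlG β β (s ^ β) ≤ 0} with hS
  have hSc : IsClosed S :=
    (isClosed_le continuous_const continuous_id).inter (isClosed_le hcont continuous_const)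
  have hSne : S.Nonempty := ⟨t, ht.le, by rw [hsign t ht] at hneg; linarith⟩
  have hSb : BddBelow S := ⟨0, fun s hs => hs.1⟩
  have hmem := hSc.csInf_mem hSne hSb
  set t0 := sInf S
  have ht0 : 0 < t0 := by
    rcases lt_or_eq_of_le hmem.1 with h | h
    · exact h
    · exfalso
      have h2 := hmem.2
      rw [← h, Real.zero_rpow hβ.ne', mlG_rec β β _ hβ hβ, zero_mul, sub_zero] at h2
      have := Real.Gamma_pos_of_pos hβ
      have : 0 < 1 / Real.Gamma β := by positivity
      linarith
  have := mlf_no_first_zero β t0 hβ hβ1 ht0 (by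
    intro s hs hst
    rw [hsign s hs]
    by_contra hc
    exact absurd (csInf_le hSb ⟨hs.le, not_lt.1 hc⟩) (not_le.2 hst))
  rw [hsign t0 ht0] at this
  linarith [hmem.2]

lemma mlf_int (β t : ℝ) (hβ : 0 < β) (ht : 0 < t) :
    IntervalIntegrable (mlf β) volume 0 t := by
  simpa using mlf_conv_int β 1 t hβ one_pos ht

lemma mlf_integral (β t : ℝ) (hβ : 0 < β) (ht : 0 < t) :
    ∫ s in (0:ℝ)..t, mlf β s = 1 - mlG β 1 (t ^ β) := by
  have h := ml_conv β 1 β t hβ one_pos hβ ht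
  rw [mlG_rec β 1 _ hβ one_pos]
  simpa [mlf] using h

theorem mittagLeffler_bounds (β : ℝ) (hβ0 : 0 < β) (hβ1 : β < 1) (x : ℝ) (hx : 0 < x) :
    1 / (1 + Real.Gamma (1 - β) * x) ≤ mittagLeffler β (-x) ∧
      mittagLeffler β (-x) ≤ 1 / (1 + x / Real.Gamma (1 + β)) := by
  have hG := Real.Gamma_pos_of_pos hβ0
  have hG1 := Real.Gamma_pos_of_pos (sub_pos.2 hβ1)
  have hG2 : Real.Gamma (1 + β) = β * Real.Gamma β := by
    rw [add_comm, Real.Gamma_add_one hβ0.ne']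
  set t : ℝ := x ^ (1/β) with htdef
  have ht : 0 < t := by positivity
  have htx : t ^ β = x := by
    rw [htdef, ← Real.rpow_mul hx.le, one_div, inv_mul_cancel₀ hβ0.ne', Real.rpow_one]
  have hE : mittagLeffler β (-x) = mlG β 1 (t ^ β) := by rw [htx]; rfl
  rw [hE]
  have hI := mlf_integral β t hβ0 ht
  constructor
  · have h := ml_conv β (1-β) β t hβ0 (by linarith) hβ0 ht
    have hint := mlf_conv_int β (1-β) t hβ0 (by linarith) ht
    rw [show (1 - β + β) = 1 by ring, sub_self, Real.rpow_zero, one_mul] at h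
    have hle : ∫ s in (0:ℝ)..t, t ^ (1 - β - 1) * mlf β s ≤
        ∫ s in (0:ℝ)..t, (t - s) ^ (1 - β - 1) * mlf β s := by
      apply intervalIntegral.integral_mono_on_of_le_Ioo ht.le
        ((mlf_int β t hβ0 ht).const_mul _) hint
      intro s hs
      apply mul_le_mul_of_nonneg_right _ (mlf_pos β s hβ0 hβ1 hs.1).le
      exact Real.rpow_le_rpow_of_nonpos (by linarith [hs.2]) (by linarith [hs.1]) (by linarith)
    rw [intervalIntegral.integral_const_mul, hI] at hle
    have hle2 := hle.trans_eq h
    rw [show 1 - β - 1 = -β by ring, Real.rpow_neg ht.le, htx, inv_mul_le_iff₀ hx] at hle2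
    rw [htx, div_le_iff₀ (by positivity)]
    linarith
  · have h := ml_conv β β 1 t hβ0 hβ0 one_pos ht
    have hint := ml_conv_int β β 1 t hβ0 hβ0 one_pos ht
    have hrec := mlG_rec β 1 (t ^ β) hβ0 one_pos
    have hmono : ∀ s ∈ Ioo 0 t, mlG β 1 (t ^ β) ≤ mlG β 1 (s ^ β) := by
      intro s hs
      have hIs := mlf_integral β s hβ0 hs.1
      have : ∫ r in (0:ℝ)..s, mlf β r ≤ ∫ r in (0:ℝ)..t, mlf β r := by
        apply intervalIntegral.integral_mono_interval le_rfl hs.1.le hs.2.le _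
          (mlf_int β t hβ0 ht)
        filter_upwards [ae_restrict_mem measurableSet_Ioc] with r hr
        exact (mlf_pos β r hβ0 hβ1 hr.1).le
      linarith
    have hle : ∫ s in (0:ℝ)..t, (t - s) ^ (β - 1) * mlG β 1 (t ^ β) ≤
        ∫ s in (0:ℝ)..t, (t - s) ^ (β - 1) * (s ^ ((1:ℝ) - 1) * mlG β 1 (s ^ β)) := by
      apply intervalIntegral.integral_mono_on_of_le_Ioo ht.le
        ((ml_ker_int β t 0 hβ0).mul_const _) hint
      intro s hs
      rw [sub_self, Real.rpow_zero, one_mul]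
      apply mul_le_mul_of_nonneg_left (hmono s hs)
      have : 0 < t - s := by linarith [hs.2]
      positivity
    rw [intervalIntegral.integral_mul_const, ml_ker_integral β t 0 hβ0, h] at hle
    rw [add_sub_cancel_right, sub_zero, add_comm β 1] at hle
    rw [Real.Gamma_one, div_one] at hrec
    have e : t ^ β * mlG β (1 + β) (t ^ β) = 1 - mlG β 1 (t ^ β) := by linarith
    rw [e, htx, div_mul_eq_mul_div, div_le_iff₀ hβ0] at hle
    rw [htx, hG2, le_div_iff₀ (by positivity)]
    have hbG : 0 < β * Real.Gamma β := by positivity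
    have : mlG β 1 x * (x / (β * Real.Gamma β)) ≤ 1 - mlG β 1 x := by
      rw [mul_div_assoc', div_le_iff₀ hbG]
      linarith
    linarith
end

section
/- Let 0 < β < 1, ν > 0, 0 < α ≤ 2, d < min(2, 1/β)·α, and let G have Fourier transform Ĝ_t(ξ) = E_β(-ν|ξ|^α t^β). Then for 0 ≤ t ≤ t', ∫_0^t ∫_{ℝ^d} [G_{t'-r}(x-y) - G_{t-r}(x-y)]² dy dr ≤ (C*/(1 - βd/α)) (t'-t)^{1-βd/α}, where C* is the constant with ∫ G_s² dx = C* s^{-βd/α}. -/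
open MeasureTheory Real Set
open scoped RealInnerProductSpace

open FourierTransform SchwartzMap in
lemma planch_aux {E : Type*} [NormedAddCommGroup E] [InnerProductSpace ℝ E]
    [FiniteDimensional ℝ E] [MeasurableSpace E] [BorelSpace E] (g : E → ℂ) (hg : Integrable g)
    (h2 : MemLp (𝓕 g) 2) : MemLp g 2 ∧ ∫ x, ‖g x‖ ^ 2 = ∫ x, ‖𝓕 g x‖ ^ 2 := by
  set Fg : Lp ℂ 2 (volume : Measure E) := h2.toLp with hFg
  set h : Lp ℂ 2 (volume : Measure E) := 𝓕⁻ Fg with hh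
  have hae : ∀ᵐ x, g x = h x := by
    apply ae_eq_of_integral_contDiff_smul_eq hg.locallyIntegrable
      ((Lp.memLp h).locallyIntegrable (by norm_num))
    intro ψ hψ hψc
    have hg₁ : HasCompactSupport (Complex.ofRealCLM ∘ ψ) := hψc.comp_left rfl
    have hg₂ : ContDiff ℝ (↑(⊤ : ℕ∞)) (Complex.ofRealCLM ∘ ψ) := by fun_prop
    set Ψ : 𝓢(E, ℂ) := hg₁.toSchwartzMap hg₂ with hΨ
    have e1 : ∫ x, ψ x • h x = Lp.toTemperedDistribution h Ψ := by
      simp [hΨ]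
    have e2 : Lp.toTemperedDistribution h Ψ = ∫ x, (𝓕⁻ Ψ) x • Fg x := by
      rw [hh, ← Lp.fourierInv_toTemperedDistribution_eq, TemperedDistribution.fourierInv_apply,
        Lp.toTemperedDistribution_apply]
    have e3 : ∫ x, (𝓕⁻ Ψ) x • Fg x = ∫ x, (𝓕⁻ Ψ) x • 𝓕 g x := by
      apply integral_congr_ae
      filter_upwards [h2.coeFn_toLp] with x hx
      rw [hFg, hx]
    have e4 : ∫ x, (𝓕 (𝓕⁻ Ψ) : 𝓢(E, ℂ)) x • g x = ∫ x, (𝓕⁻ Ψ) x • 𝓕 g x := by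
      have := VectorFourier.integral_fourierIntegral_smul_eq_flip (L := innerₗ E)
        Real.continuous_fourierChar continuous_inner ((𝓕⁻ Ψ : 𝓢(E, ℂ)).integrable (μ := volume)) hg
      rw [SchwartzMap.fourier_coe]
      rw [flip_innerₗ] at this
      exact this
    rw [e1, e2, e3, ← e4, FourierTransform.fourier_fourierInv_eq]
    simp [hΨ]
  have hm : MemLp g 2 := (memLp_congr_ae hae).2 (Lp.memLp h)
  refine ⟨hm, ?_⟩
  have n1 : ‖h‖ = ‖Fg‖ := by
    rw [← Lp.norm_fourier_eq h, hh, FourierTransform.fourier_fourierInv_eq]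
  have key : ∀ f : Lp ℂ 2 (volume : Measure E), ∫ x, ‖f x‖ ^ 2 = ‖f‖ ^ 2 := by
    intro f
    have h1 := L2.inner_def (𝕜 := ℂ) f f
    rw [inner_self_eq_norm_sq_to_K] at h1
    simp only [inner_self_eq_norm_sq_to_K] at h1
    have : ((∫ x, ‖f x‖ ^ 2 : ℝ) : ℂ) = ((‖f‖ ^ 2 : ℝ) : ℂ) := by
      rw [← integral_complex_ofReal]
      push_cast
      exact h1.symm
    exact_mod_cast this
  calc ∫ x, ‖g x‖ ^ 2 = ∫ x, ‖h x‖ ^ 2 := by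
        apply integral_congr_ae
        filter_upwards [hae] with x hx
        rw [hx]
    _ = ∫ x, ‖Fg x‖ ^ 2 := by rw [key, key, n1]
    _ = _ := by
        apply integral_congr_ae
        filter_upwards [h2.coeFn_toLp] with x hx
        rw [hFg, hx]
lemma rpow_mul_exp_le_Gamma (y R : ℝ) (hy : 1 ≤ y) (hR : 0 < R) :
    R ^ (y - 1) * Real.exp (-R) ≤ Real.Gamma y := by
  rw [Real.Gamma_eq_integral (by linarith)]
  have hi := Real.GammaIntegral_convergent (show 0 < y by linarith)
  have h1 : ∫ x in Ioi R, R ^ (y - 1) * Real.exp (-x) = R ^ (y - 1) * Real.exp (-R) := by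
    rw [integral_const_mul, integral_exp_neg_Ioi]
  rw [← h1]
  calc ∫ x in Ioi R, R ^ (y - 1) * Real.exp (-x)
      ≤ ∫ x in Ioi R, Real.exp (-x) * x ^ (y - 1) := by
        apply setIntegral_mono_on
        · exact (integrableOn_exp_neg_Ioi R).const_mul _
        · exact hi.mono_set (Ioi_subset_Ioi hR.le)
        · exact measurableSet_Ioi
        · intro x hx
          rw [mul_comm]
          gcongr
          exact le_of_lt hx
    _ ≤ _ := by
        apply setIntegral_mono_set hi
        · filter_upwards [ae_restrict_mem measurableSet_Ioi] with x hx
          have : (0:ℝ) < x := hx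
          positivity
        · exact (Ioi_subset_Ioi hR.le).eventuallyLE

lemma summable_ml (β γ x : ℝ) (hβ : 0 < β) (hγ : 0 < γ) (hx : 0 ≤ x) :
    Summable fun n : ℕ => x ^ n / Real.Gamma (β * n + γ) := by
  set R : ℝ := (2 * (x + 1)) ^ (β⁻¹) with hR
  have hRpos : 0 < R := by positivity
  have hRβ : R ^ β = 2 * (x + 1) := by
    rw [hR, ← Real.rpow_mul (by positivity), inv_mul_cancel₀ hβ.ne', Real.rpow_one]
  have hs : Summable fun n : ℕ => (Real.exp R * R ^ (1 - γ)) * (1 / 2 : ℝ) ^ n :=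
    (summable_geometric_two).mul_left _
  refine hs.of_norm_bounded_eventually_nat ?_
  obtain ⟨N, hN⟩ := exists_nat_gt (1 / β)
  filter_upwards [Filter.eventually_ge_atTop N] with n hn
  have hn' : (1:ℝ) ≤ β * n := by
    have : 1 / β < n := lt_of_lt_of_le hN (by exact_mod_cast hn)
    rw [div_lt_iff₀ hβ] at this
    linarith
  have hG := rpow_mul_exp_le_Gamma (β * n + γ) R (by linarith) hRpos
  have hGp : 0 < Real.Gamma (β * n + γ) := Real.Gamma_pos_of_pos (by linarith)
  rw [Real.norm_of_nonneg (by positivity), div_le_iff₀ hGp]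
  have e : (Real.exp R * R ^ (1 - γ)) * (1 / 2 : ℝ) ^ n * (R ^ (β * n + γ - 1) * Real.exp (-R))
      = (x + 1) ^ n := by
    have e1 : R ^ (β * n + γ - 1) = R ^ (γ - 1) * (2 * (x + 1)) ^ n := by
      rw [← hRβ, ← Real.rpow_natCast, ← Real.rpow_mul hRpos.le, ← Real.rpow_add hRpos]
      congr 1; ring
    have e2 : R ^ (1 - γ) * R ^ (γ - 1) = 1 := by
      rw [← Real.rpow_add hRpos]; simp
    have e3 : Real.exp R * Real.exp (-R) = 1 := by
      rw [← Real.exp_add]; simp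
    have e4 : (1 / 2 : ℝ) ^ n * (2 * (x + 1)) ^ n = (x + 1) ^ n := by
      rw [← mul_pow]; congr 1; ring
    rw [e1]
    calc _ = (Real.exp R * Real.exp (-R)) * (R ^ (1 - γ) * R ^ (γ - 1)) *
          ((1 / 2 : ℝ) ^ n * (2 * (x + 1)) ^ n) := by ring
      _ = _ := by rw [e2, e3, e4]; ring
  calc x ^ n ≤ (x + 1) ^ n := by gcongr; linarith
    _ = _ := e.symm
    _ ≤ _ := by gcongr

lemma beta_real (γ δ t : ℝ) (hγ : 0 < γ) (hδ : 0 < δ) (ht : 0 < t) :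
    ∫ s in Ioc 0 t, (t - s) ^ (δ - 1) * s ^ (γ - 1)
      = t ^ (γ + δ - 1) * (Real.Gamma γ * Real.Gamma δ / Real.Gamma (γ + δ)) := by
  have h := Complex.betaIntegral_scaled (γ : ℂ) (δ : ℂ) ht
  rw [Complex.betaIntegral_eq_Gamma_mul_div _ _ (by simpa) (by simpa),
    intervalIntegral.integral_of_le ht.le] at h
  have e : ∀ s ∈ Ioc 0 t, (s : ℂ) ^ ((γ : ℂ) - 1) * ((t : ℂ) - s) ^ ((δ : ℂ) - 1)
      = (((t - s) ^ (δ - 1) * s ^ (γ - 1) : ℝ) : ℂ) := by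
    intro s hs
    push_cast
    rw [Complex.ofReal_cpow hs.1.le, Complex.ofReal_cpow (by linarith [hs.2])]
    push_cast
    ring
  rw [setIntegral_congr_fun measurableSet_Ioc e, integral_complex_ofReal] at h
  have : ((t : ℂ) ^ ((γ : ℂ) + δ - 1) * (Complex.Gamma γ * Complex.Gamma δ / Complex.Gamma (γ + δ)))
    = ((t ^ (γ + δ - 1) * (Real.Gamma γ * Real.Gamma δ / Real.Gamma (γ + δ)) : ℝ) : ℂ) := by
    push_cast
    rw [Complex.ofReal_cpow ht.le, ← Complex.Gamma_ofReal, ← Complex.Gamma_ofReal,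
      ← Complex.Gamma_ofReal]
    push_cast
    ring
  rw [this] at h
  exact_mod_cast h

lemma beta_integrable (γ δ t : ℝ) (hγ : 0 < γ) (hδ : 0 < δ) (ht : 0 < t) :
    IntegrableOn (fun s => (t - s) ^ (δ - 1) * s ^ (γ - 1)) (Ioc 0 t) := by
  by_contra hc
  have h := beta_real γ δ t hγ hδ ht
  rw [integral_undef hc] at h
  have h1 := Real.Gamma_pos_of_pos hγ
  have h2 := Real.Gamma_pos_of_pos hδ
  have h3 := Real.Gamma_pos_of_pos (add_pos hγ hδ)
  have : 0 < t ^ (γ + δ - 1) * (Real.Gamma γ * Real.Gamma δ / Real.Gamma (γ + δ)) := by positivity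
  linarith

/-- entire part -/
noncomputable def mlF (β γ x : ℝ) : ℝ := ∑' n : ℕ, (-x) ^ n / Real.Gamma (β * n + γ)

lemma mlF_summable (β γ x : ℝ) (hβ : 0 < β) (hγ : 0 < γ) :
    Summable fun n : ℕ => (-x) ^ n / Real.Gamma (β * n + γ) := by
  refine (summable_ml β γ |x| hβ hγ (abs_nonneg x)).of_norm_bounded ?_
  intro n
  have hGp : 0 < Real.Gamma (β * n + γ) := Real.Gamma_pos_of_pos (by positivity)
  simp [abs_of_pos hGp]

lemma mlF_continuous (β γ : ℝ) (hβ : 0 < β) (hγ : 0 < γ) : Continuous (mlF β γ) := by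
  have key : ∀ M : ℝ, 0 < M → ContinuousOn (mlF β γ) (Ioo (-M) M) := by
    intro M hM
    refine continuousOn_tsum (u := fun n : ℕ => M ^ n / Real.Gamma (β * n + γ)) ?_
      (summable_ml β γ M hβ hγ hM.le) ?_
    · intro n; fun_prop
    · intro n x hx
      have hGp : 0 < Real.Gamma (β * n + γ) := Real.Gamma_pos_of_pos (by positivity)
      rw [norm_div, norm_pow, Real.norm_of_nonneg hGp.le]
      gcongr
      rw [norm_neg, Real.norm_eq_abs]
      exact (abs_lt.2 hx).le
  rw [continuous_iff_continuousAt]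
  intro x
  exact (key (|x| + 1) (by positivity)).continuousAt
    (Ioo_mem_nhds (by linarith [neg_abs_le x]) (by linarith [le_abs_self x]))

/-- time profile -/
noncomputable def mlW (β γ t : ℝ) : ℝ := t ^ (γ - 1) * mlF β γ (t ^ β)

lemma mlW_hasSum (β γ t : ℝ) (hβ : 0 < β) (hγ : 0 < γ) (ht : 0 < t) :
    HasSum (fun n : ℕ => (-1) ^ n * t ^ (β * n + γ - 1) / Real.Gamma (β * n + γ)) (mlW β γ t) := by
  have := (mlF_summable β γ (t ^ β) hβ hγ).hasSum.mul_left (t ^ (γ - 1))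
  have e : (fun n : ℕ => (-1) ^ n * t ^ (β * n + γ - 1) / Real.Gamma (β * n + γ)) =
      fun n : ℕ => t ^ (γ - 1) * ((-t ^ β) ^ n / Real.Gamma (β * n + γ)) := by
    funext n
    rw [show β * n + γ - 1 = (γ - 1) + β * n by ring, Real.rpow_add ht, Real.rpow_mul ht.le,
      Real.rpow_natCast, neg_pow (t ^ β)]
    ring
  rw [e]
  exact this

lemma mlW_continuousOn (β γ : ℝ) (hβ : 0 < β) (hγ : 0 < γ) : ContinuousOn (mlW β γ) (Ioi 0) := by
  unfold mlW
  apply ContinuousOn.mul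
  · intro t ht
    exact (Real.continuousAt_rpow_const _ _ (Or.inl (ne_of_gt ht))).continuousWithinAt
  · exact ((mlF_continuous β γ hβ hγ).comp (Real.continuous_rpow_const hβ.le)).continuousOn

lemma mlW_integrable (β γ δ t : ℝ) (hβ : 0 < β) (hγ : 0 < γ) (hδ : 0 < δ) (ht : 0 < t) :
    IntegrableOn (fun s => (t - s) ^ (δ - 1) * mlW β γ s) (Ioc 0 t) := by
  have hc : Continuous fun s : ℝ => mlF β γ (s ^ β) :=
    (mlF_continuous β γ hβ hγ).comp (Real.continuous_rpow_const hβ.le)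
  obtain ⟨C, hC⟩ := isCompact_Icc.exists_bound_of_continuousOn (s := Icc 0 t) hc.continuousOn
  have := (beta_integrable γ δ t hγ hδ ht).mul_bdd (c := C)
    (hc.aestronglyMeasurable) (by
      filter_upwards [ae_restrict_mem measurableSet_Ioc] with s hs
      exact hC s ⟨hs.1.le, hs.2⟩)
  refine this.congr ?_
  filter_upwards with s
  simp only [mlW]; ring

lemma mlW_conv (β γ δ t : ℝ) (hβ : 0 < β) (hγ : 0 < γ) (hδ : 0 < δ) (ht : 0 < t) :
    ∫ s in Ioc 0 t, (t - s) ^ (δ - 1) * mlW β γ s = Real.Gamma δ * mlW β (γ + δ) t := by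
  set F : ℕ → ℝ → ℝ := fun n s =>
    (-1) ^ n / Real.Gamma (β * n + γ) * ((t - s) ^ (δ - 1) * s ^ (β * n + γ - 1)) with hF
  have hint : ∀ n, IntegrableOn (F n) (Ioc 0 t) := fun n =>
    (beta_integrable (β * n + γ) δ t (by positivity) hδ ht).const_mul _
  have hval : ∀ n, ∫ s in Ioc 0 t, F n s = Real.Gamma δ *
      ((-1) ^ n * t ^ (β * n + (γ + δ) - 1) / Real.Gamma (β * n + (γ + δ))) := by
    intro n
    have hGp : 0 < Real.Gamma (β * n + γ) := Real.Gamma_pos_of_pos (by positivity)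
    rw [integral_const_mul, beta_real _ _ _ (by positivity) hδ ht, ← add_assoc]
    field_simp
  have hnorm : ∀ n, ∫ s in Ioc 0 t, ‖F n s‖ = Real.Gamma δ * t ^ (γ + δ - 1) *
      ((t ^ β) ^ n / Real.Gamma (β * n + (γ + δ))) := by
    intro n
    have hGp : 0 < Real.Gamma (β * n + γ) := Real.Gamma_pos_of_pos (by positivity)
    have : ∀ s ∈ Ioc 0 t, ‖F n s‖ =
        1 / Real.Gamma (β * n + γ) * ((t - s) ^ (δ - 1) * s ^ (β * n + γ - 1)) := by
      intro s hs
      have h1 : 0 ≤ (t - s) ^ (δ - 1) := Real.rpow_nonneg (by linarith [hs.2]) _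
      have h2 : 0 ≤ s ^ (β * n + γ - 1) := Real.rpow_nonneg (by linarith [hs.1]) _
      simp only [hF, norm_mul, norm_div, norm_pow, norm_neg, norm_one, one_pow]
      rw [Real.norm_of_nonneg hGp.le, Real.norm_of_nonneg h1, Real.norm_of_nonneg h2]
    rw [setIntegral_congr_fun measurableSet_Ioc this, integral_const_mul,
      beta_real _ _ _ (by positivity) hδ ht, ← Real.rpow_natCast, ← Real.rpow_mul ht.le,
      show β * n + γ + δ - 1 = (γ + δ - 1) + β * n by ring, Real.rpow_add ht, ← add_assoc]
    field_simp
  have hs : Summable fun n => ∫ s in Ioc 0 t, ‖F n s‖ := by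
    simp_rw [hnorm]
    exact (summable_ml β (γ + δ) (t ^ β) hβ (by positivity) (by positivity)).mul_left _
  have h1 := hasSum_integral_of_summable_integral_norm hint hs
  have h2 : ∫ s in Ioc 0 t, ∑' n, F n s = ∫ s in Ioc 0 t, (t - s) ^ (δ - 1) * mlW β γ s := by
    apply setIntegral_congr_fun measurableSet_Ioc
    intro s hs
    have := ((mlW_hasSum β γ s hβ hγ hs.1).mul_left ((t - s) ^ (δ - 1))).tsum_eq
    simp only []
    rw [← this]
    apply tsum_congr
    intro n
    simp only [hF]; ring
  rw [h2] at h1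
  simp_rw [hval] at h1
  exact h1.unique ((mlW_hasSum β (γ + δ) t hβ (by positivity) ht).mul_left _)
lemma volterra_pos (β c : ℝ) (hβ0 : 0 < β) (hβ1 : β < 1) (hc : 0 < c) (w : ℝ → ℝ)
    (hw : ContinuousOn w (Ioi 0))
    (hint : ∀ t > 0, IntegrableOn (fun s => (t - s) ^ (β - 1) * w s) (Ioc 0 t))
    (heq : ∀ t > 0, c * w t + ∫ s in Ioc 0 t, (t - s) ^ (β - 1) * w s = t ^ (β - 1))
    (ε : ℝ) (hε : 0 < ε) (hpos : ∀ s, 0 < s → s < ε → 0 < w s) :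
    ∀ t > 0, 0 < w t := by
  by_contra hcon
  push Not at hcon
  obtain ⟨t1, ht1, hwt1⟩ := hcon
  have hcl : IsClosed (Ici ε ∩ w ⁻¹' Iic 0) :=
    (hw.mono (fun s hs => lt_of_lt_of_le hε hs)).preimage_isClosed_of_isClosed isClosed_Ici
      isClosed_Iic
  have hne : (Ici ε ∩ w ⁻¹' Iic 0).Nonempty := by
    refine ⟨t1, ?_, hwt1⟩
    by_contra h
    exact absurd (hpos t1 ht1 (not_le.1 h)) (not_lt.2 hwt1)
  have hbdd : BddBelow (Ici ε ∩ w ⁻¹' Iic 0) := ⟨ε, fun s hs => hs.1⟩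
  set t0 := sInf (Ici ε ∩ w ⁻¹' Iic 0) with ht0
  have hmem := hcl.csInf_mem hne hbdd
  rw [← ht0] at hmem
  have ht0ε : ε ≤ t0 := hmem.1
  have hwt0 : w t0 ≤ 0 := hmem.2
  have ht0pos : 0 < t0 := lt_of_lt_of_le hε ht0ε
  have hbefore : ∀ s, 0 < s → s < t0 → 0 < w s := by
    intro s hs hst
    by_contra h
    rcases lt_or_ge s ε with h1 | h1
    · exact h (hpos s hs h1)
    · exact absurd (csInf_le hbdd ⟨h1, not_lt.1 h⟩) (not_le.2 hst)
  -- choose the step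
  obtain ⟨δ, hδ, hδt, hδc⟩ : ∃ δ > 0, δ ≤ t0 / 2 ∧ δ ^ β / β < c / 2 := by
    have hd : Filter.Tendsto (fun δ : ℝ => δ ^ β / β) (nhdsWithin 0 (Ioi 0)) (nhds 0) := by
      have : Continuous fun δ : ℝ => δ ^ β / β :=
        (Real.continuous_rpow_const hβ0.le).div_const _
      have h := this.tendsto 0
      simp only [Real.zero_rpow hβ0.ne', zero_div] at h
      exact h.mono_left nhdsWithin_le_nhds
    have h1 := hd.eventually (gt_mem_nhds (show 0 < c / 2 by positivity))
    have h2 : ∀ᶠ δ : ℝ in nhdsWithin 0 (Ioi 0), δ ∈ Ioo 0 (t0 / 2) :=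
      Ioo_mem_nhdsGT (by positivity)
    obtain ⟨δ, h3, h4⟩ := (h1.and h2).exists
    exact ⟨δ, h4.1, h4.2.le, h3⟩
  obtain ⟨t, htm, htmax⟩ := isCompact_Icc.exists_isMaxOn (s := Icc (t0 - δ) t0)
    ⟨t0, by constructor <;> linarith⟩ (hw.mono (fun s hs => by
      have := hs.1
      show 0 < s
      linarith))
  have hwt : 0 < w t := lt_of_lt_of_le (hbefore (t0 - δ) (by linarith) (by linarith))
    (htmax ⟨le_refl _, by linarith⟩)
  have htt0 : t < t0 := by
    rcases lt_or_eq_of_le htm.2 with h | h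
    · exact h
    · rw [h] at hwt; linarith
  have htpos : 0 < t := by linarith [htm.1]
  have I0 := hint t0 ht0pos
  have hsplit : ∫ s in Ioc 0 t0, (t0 - s) ^ (β - 1) * w s =
      (∫ s in Ioc 0 t, (t0 - s) ^ (β - 1) * w s) + ∫ s in Ioc t t0, (t0 - s) ^ (β - 1) * w s := by
    rw [← setIntegral_union (Ioc_disjoint_Ioc_of_le le_rfl) measurableSet_Ioc
      (I0.mono_set (Ioc_subset_Ioc_right htt0.le)) (I0.mono_set (Ioc_subset_Ioc_left htpos.le)),
      Ioc_union_Ioc_eq_Ioc htpos.le htt0.le]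
  set q : ℝ := t0 ^ (β - 1) / t ^ (β - 1) with hq
  have htp : 0 < t ^ (β - 1) := by positivity
  have ht0p : 0 < t0 ^ (β - 1) := by positivity
  have hA : ∫ s in Ioc 0 t, (t0 - s) ^ (β - 1) * w s ≤
      q * ∫ s in Ioc 0 t, (t - s) ^ (β - 1) * w s := by
    rw [← integral_const_mul, integral_Ioc_eq_integral_Ioo, integral_Ioc_eq_integral_Ioo]
    apply setIntegral_mono_on
    · exact I0.mono_set (Ioo_subset_Ioc_self.trans (Ioc_subset_Ioc_right htt0.le))
    · exact ((hint t htpos).mono_set Ioo_subset_Ioc_self).const_mul _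
    · exact measurableSet_Ioo
    · intro s hs
      have hws := hbefore s hs.1 (hs.2.trans htt0)
      rw [← mul_assoc]
      gcongr
      have h1 : 0 < t - s := by linarith [hs.2]
      have h2 : 0 < t0 - s := by linarith
      rw [hq, ← Real.div_rpow ht0pos.le htpos.le, ← Real.mul_rpow (by positivity) h1.le]
      apply Real.rpow_le_rpow_of_nonpos (by positivity) _ (by linarith)
      rw [div_mul_eq_mul_div, div_le_iff₀ htpos]
      nlinarith [hs.1]
  have hkint : ∫ s in Ioc t t0, (t0 - s) ^ (β - 1) = (t0 - t) ^ β / β := by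
    rw [← intervalIntegral.integral_of_le htt0.le,
      intervalIntegral.integral_comp_sub_left (fun u : ℝ => u ^ (β - 1)) t0, sub_self,
      integral_rpow (Or.inl (by linarith))]
    simp [Real.zero_rpow hβ0.ne']
  have hkI : IntegrableOn (fun s => (t0 - s) ^ (β - 1)) (Ioc t t0) := by
    by_contra h
    rw [integral_undef h] at hkint
    have : 0 < (t0 - t) ^ β / β := by
      have : 0 < t0 - t := by linarith
      positivity
    linarith
  have hB : ∫ s in Ioc t t0, (t0 - s) ^ (β - 1) * w s ≤ (t0 - t) ^ β / β * w t := by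
    rw [← hkint, ← integral_mul_const]
    apply setIntegral_mono_on
    · exact I0.mono_set (Ioc_subset_Ioc_left htpos.le)
    · exact hkI.mul_const _
    · exact measurableSet_Ioc
    · intro s hs
      have : w s ≤ w t := htmax ⟨by linarith [htm.1, hs.1], hs.2⟩
      have h2 : 0 ≤ t0 - s := by linarith [hs.2]
      gcongr
  have hδ' : (t0 - t) ^ β / β < c / 2 := by
    refine lt_of_le_of_lt ?_ hδc
    have : 0 ≤ t0 - t := by linarith
    gcongr
    linarith [htm.1]
  have hq2 : 1 / 2 ≤ q := by
    rw [hq, ← Real.div_rpow ht0pos.le htpos.le]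
    have h2 : t0 / t ≤ 2 := by
      rw [div_le_iff₀ htpos]; linarith [htm.1]
    calc (1 / 2 : ℝ) = 2 ^ (-1 : ℝ) := by rw [Real.rpow_neg_one]; norm_num
      _ ≤ 2 ^ (β - 1) := Real.rpow_le_rpow_of_exponent_le (by norm_num) (by linarith)
      _ ≤ _ := Real.rpow_le_rpow_of_nonpos (by positivity) h2 (by linarith)
  have E0 := heq t0 ht0pos
  have E1 := heq t htpos
  have hqt : q * t ^ (β - 1) = t0 ^ (β - 1) := by rw [hq]; field_simp
  have E2 : ∫ s in Ioc 0 t, (t - s) ^ (β - 1) * w s = t ^ (β - 1) - c * w t := by linarith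
  rw [E2, mul_sub, hqt] at hA
  rw [hsplit] at E0
  have h5 : c / 2 * w t ≤ q * (c * w t) := by
    have : 0 < c * w t := by positivity
    nlinarith
  have h6 : (t0 - t) ^ β / β * w t < c / 2 * w t := by gcongr
  have h7 : c * w t0 ≤ 0 := by nlinarith
  linarith

lemma mlW_add (β γ t : ℝ) (hβ : 0 < β) (hγ : 0 < γ) (ht : 0 < t) :
    mlW β γ t + mlW β (γ + β) t = t ^ (γ - 1) / Real.Gamma γ := by
  have h1 := mlW_hasSum β γ t hβ hγ ht
  have h2 := mlW_hasSum β (γ + β) t hβ (by positivity) ht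
  have h3 := (hasSum_nat_add_iff' 1).2 h1
  simp only [Finset.range_one, Finset.sum_singleton, pow_zero, Nat.cast_zero, mul_zero, zero_add,
    one_mul] at h3
  have h4 := h2.neg
  have e : (fun n : ℕ => -((-1) ^ n * t ^ (β * n + (γ + β) - 1) / Real.Gamma (β * n + (γ + β))))
      = fun n : ℕ => (-1) ^ (n + 1) * t ^ (β * ((n + 1 : ℕ) : ℝ) + γ - 1)
        / Real.Gamma (β * ((n + 1 : ℕ) : ℝ) + γ) := by
    funext n
    push_cast
    rw [show β * (n + 1 : ℝ) + γ = β * n + (γ + β) by ring, pow_succ]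
    ring
  rw [e] at h4
  have := h3.unique h4
  linarith

lemma mlW_pos (β : ℝ) (hβ0 : 0 < β) (hβ1 : β < 1) (t : ℝ) (ht : 0 < t) : 0 < mlW β β t := by
  have hG : 0 < Real.Gamma β := Real.Gamma_pos_of_pos hβ0
  have hF0 : 0 < mlF β β ((0:ℝ) ^ β) := by
    rw [Real.zero_rpow hβ0.ne', mlF, tsum_eq_single 0]
    · simp [hG]
    · intro n hn
      simp [hn]
  have hcont : Continuous fun s : ℝ => mlF β β (s ^ β) :=
    (mlF_continuous β β hβ0 hβ0).comp (Real.continuous_rpow_const hβ0.le)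
  obtain ⟨ε, hε, hball⟩ := Metric.eventually_nhds_iff.1
    ((hcont.tendsto 0).eventually (lt_mem_nhds hF0))
  refine volterra_pos β (Real.Gamma β) hβ0 hβ1 hG (mlW β β) (mlW_continuousOn β β hβ0 hβ0)
    (fun t ht => mlW_integrable β β β t hβ0 hβ0 hβ0 ht) ?_ ε hε ?_ t ht
  · intro t ht
    rw [mlW_conv β β β t hβ0 hβ0 hβ0 ht, ← mul_add, mlW_add β β t hβ0 hβ0 ht]
    field_simp
  · intro s hs hsε
    have := @hball s (by simpa [abs_of_pos hs] using hsε)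
    exact mul_pos (Real.rpow_pos_of_pos hs _) this

lemma mlW_one (β t : ℝ) (hβ0 : 0 < β) (ht : 0 < t) :
    mlW β 1 t = 1 - ∫ s in Ioc 0 t, mlW β β s := by
  have h1 := mlW_add β 1 t hβ0 one_pos ht
  have h2 := mlW_conv β β 1 t hβ0 hβ0 one_pos ht
  simp only [sub_self, Real.rpow_zero, one_mul, Real.Gamma_one, div_one] at h1 h2
  rw [h2, add_comm β 1]; linarith

lemma mlW_int1 (β t : ℝ) (hβ0 : 0 < β) (ht : 0 < t) : IntegrableOn (mlW β β) (Ioc 0 t) := by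
  simpa using mlW_integrable β β 1 t hβ0 hβ0 one_pos ht

lemma mlW_one_anti (β s t : ℝ) (hβ0 : 0 < β) (hβ1 : β < 1) (hs : 0 < s) (hst : s ≤ t) :
    mlW β 1 t ≤ mlW β 1 s := by
  rw [mlW_one β t hβ0 (by linarith), mlW_one β s hβ0 hs]
  have : ∫ r in Ioc 0 s, mlW β β r ≤ ∫ r in Ioc 0 t, mlW β β r := by
    apply setIntegral_mono_set (mlW_int1 β t hβ0 (by linarith))
    · filter_upwards [ae_restrict_mem measurableSet_Ioc] with r hr
      exact (mlW_pos β hβ0 hβ1 r hr.1).le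
    · exact (Ioc_subset_Ioc_right hst).eventuallyLE
  linarith

lemma mlW_one_nonneg (β t : ℝ) (hβ0 : 0 < β) (hβ1 : β < 1) (ht : 0 < t) : 0 ≤ mlW β 1 t := by
  rw [mlW_one β t hβ0 ht]
  have hG : 0 < Real.Gamma β := Real.Gamma_pos_of_pos hβ0
  have h1 := mlW_conv β β β t hβ0 hβ0 hβ0 ht
  have h2 := mlW_add β β t hβ0 hβ0 ht
  have h3 := mlW_pos β hβ0 hβ1 t ht
  have htp : 0 < t ^ (β - 1) := by positivity
  have h4 : t ^ (β - 1) * ∫ s in Ioc 0 t, mlW β β s ≤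
      ∫ s in Ioc 0 t, (t - s) ^ (β - 1) * mlW β β s := by
    rw [← integral_const_mul, integral_Ioc_eq_integral_Ioo, integral_Ioc_eq_integral_Ioo]
    apply setIntegral_mono_on
    · exact ((mlW_int1 β t hβ0 ht).mono_set Ioo_subset_Ioc_self).const_mul _
    · exact (mlW_integrable β β β t hβ0 hβ0 hβ0 ht).mono_set Ioo_subset_Ioc_self
    · exact measurableSet_Ioo
    · intro s hs
      have := mlW_pos β hβ0 hβ1 s hs.1
      gcongr ?_ * _
      exact Real.rpow_le_rpow_of_nonpos (by linarith [hs.2]) (by linarith [hs.1]) (by linarith)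
  rw [h1] at h4
  have h5 : Real.Gamma β * mlW β (β + β) t ≤ t ^ (β - 1) := by
    rw [eq_div_iff hG.ne'] at h2
    nlinarith
  have h6 : t ^ (β - 1) * ∫ s in Ioc 0 t, mlW β β s ≤ t ^ (β - 1) * 1 := by linarith
  have := le_of_mul_le_mul_left h6 htp
  linarith

lemma mlW_one_decay (β t : ℝ) (hβ0 : 0 < β) (hβ1 : β < 1) (ht : 0 < t) :
    t ^ β / β * mlW β 1 t ≤ Real.Gamma β := by
  have hG : 0 < Real.Gamma β := Real.Gamma_pos_of_pos hβ0
  have h1 := mlW_conv β 1 β t hβ0 one_pos hβ0 ht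
  have h2 := mlW_add β 1 t hβ0 one_pos ht
  have h0 := mlW_one_nonneg β t hβ0 hβ1 ht
  simp only [sub_self, Real.rpow_zero, Real.Gamma_one, div_one] at h2
  have hk : ∫ s in Ioc 0 t, (t - s) ^ (β - 1) = t ^ β / β := by
    rw [← intervalIntegral.integral_of_le ht.le,
      intervalIntegral.integral_comp_sub_left (fun u : ℝ => u ^ (β - 1)) t, sub_self,
      integral_rpow (Or.inl (by linarith))]
    simp [Real.zero_rpow hβ0.ne']
  have hkI : IntegrableOn (fun s => (t - s) ^ (β - 1)) (Ioc 0 t) := by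
    simpa using beta_integrable 1 β t one_pos hβ0 ht
  have h4 : t ^ β / β * mlW β 1 t ≤ ∫ s in Ioc 0 t, (t - s) ^ (β - 1) * mlW β 1 s := by
    rw [← hk, ← integral_mul_const]
    apply setIntegral_mono_on (hkI.mul_const _) (mlW_integrable β 1 β t hβ0 one_pos hβ0 ht)
      measurableSet_Ioc
    intro s hs
    have := mlW_one_anti β s t hβ0 hβ1 hs.1 hs.2
    have h2 : 0 ≤ t - s := by linarith [hs.2]
    gcongr
  rw [h1] at h4
  nlinarith

lemma ml_eq (β x : ℝ) (hβ0 : 0 < β) (hx : 0 < x) :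
    mittagLeffler β (-x) = mlW β 1 (x ^ β⁻¹) := by
  unfold mittagLeffler mlW mlF
  have e : (x ^ β⁻¹) ^ β = x := by
    rw [← Real.rpow_mul hx.le, inv_mul_cancel₀ hβ0.ne', Real.rpow_one]
  rw [e]
  simp [add_comm]

lemma ml_zero (β : ℝ) : mittagLeffler β 0 = 1 := by
  unfold mittagLeffler
  rw [tsum_eq_single 0]
  · simp
  · intro n hn; simp [hn]

lemma ml_nonneg (β x : ℝ) (hβ0 : 0 < β) (hβ1 : β < 1) (hx : 0 ≤ x) :
    0 ≤ mittagLeffler β (-x) := by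
  rcases hx.eq_or_lt with rfl | hx
  · simp [ml_zero]
  · rw [ml_eq β x hβ0 hx]
    exact mlW_one_nonneg β _ hβ0 hβ1 (by positivity)

lemma ml_anti (β x y : ℝ) (hβ0 : 0 < β) (hβ1 : β < 1) (hx : 0 ≤ x) (hxy : x ≤ y) :
    mittagLeffler β (-y) ≤ mittagLeffler β (-x) := by
  rcases hx.eq_or_lt with rfl | hx
  · rcases hxy.eq_or_lt with rfl | hy
    · exact le_rfl
    · rw [neg_zero, ml_zero, ml_eq β y hβ0 hy]
      have hp : 0 < y ^ β⁻¹ := by positivity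
      rw [mlW_one β _ hβ0 hp]
      have : 0 ≤ ∫ s in Ioc 0 (y ^ β⁻¹), mlW β β s :=
        setIntegral_nonneg measurableSet_Ioc fun s hs => (mlW_pos β hβ0 hβ1 s hs.1).le
      linarith
  · rw [ml_eq β x hβ0 hx, ml_eq β y hβ0 (by linarith)]
    apply mlW_one_anti β _ _ hβ0 hβ1 (by positivity)
    gcongr

lemma ml_decay (β x : ℝ) (hβ0 : 0 < β) (hβ1 : β < 1) (hx : 0 ≤ x) :
    mittagLeffler β (-x) * (1 + x) ≤ 1 + β * Real.Gamma β := by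
  have hG : 0 < Real.Gamma β := Real.Gamma_pos_of_pos hβ0
  have h1 := ml_anti β 0 x hβ0 hβ1 le_rfl hx
  rw [neg_zero, ml_zero] at h1
  rcases hx.eq_or_lt with rfl | hx
  · simp only [neg_zero, ml_zero]
    nlinarith
  · have h2 := mlW_one_decay β (x ^ β⁻¹) hβ0 hβ1 (by positivity)
    rw [← ml_eq β x hβ0 hx, ← Real.rpow_mul hx.le, inv_mul_cancel₀ hβ0.ne', Real.rpow_one,
      div_mul_eq_mul_div, div_le_iff₀ hβ0] at h2
    nlinarith
lemma ml_cont (β : ℝ) (hβ : 0 < β) : Continuous (mittagLeffler β) := by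
  have : mittagLeffler β = fun x => mlF β 1 (-x) := by
    funext x
    simp [mittagLeffler, mlF, add_comm]
  rw [this]
  exact (mlF_continuous β 1 hβ one_pos).comp continuous_neg

open FourierTransform in
lemma fourier_G (d : ℕ) (g : EuclideanSpace ℝ (Fin d) → ℝ) (φ : EuclideanSpace ℝ (Fin d) → ℝ)
    (h : ∀ ξ : EuclideanSpace ℝ (Fin d),
      (∫ x, Complex.exp (Complex.I * (⟪ξ, x⟫ : ℝ)) * (g x : ℂ)) = (φ ξ : ℂ)) :
    𝓕 (fun x => (g x : ℂ)) = fun η => ((φ (-(2 * π) • η) : ℝ) : ℂ) := by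
  funext η
  rw [Real.fourier_eq', ← h]
  congr 1
  funext x
  rw [smul_eq_mul]
  congr 2
  rw [inner_smul_left, real_inner_comm]
  push_cast
  simp
  ring

lemma mult_bound (β ν α s r : ℝ) (hβ0 : 0 < β) (hβ1 : β < 1) (hν : 0 < ν) (hα0 : 0 < α)
    (hα2 : α ≤ 2) (hs : 0 < s) :
    ∃ C : ℝ, 0 ≤ C ∧ ∀ r : ℝ, 0 ≤ r →
      (mittagLeffler β (-(ν * (2 * π * r) ^ α * s ^ β))) ^ 2 ≤ C * (1 + r) ^ (-(2 * α)) := by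
  have hG : 0 < Real.Gamma β := Real.Gamma_pos_of_pos hβ0
  set c : ℝ := ν * (2 * π) ^ α * s ^ β with hc
  have hcpos : 0 < c := by have := Real.pi_pos; positivity
  set D : ℝ := (1 + β * Real.Gamma β) * (4 * (1 + 1 / c)) with hD
  have hDpos : 0 < D := by positivity
  refine ⟨D ^ 2, by positivity, fun r hr => ?_⟩
  have e : ν * (2 * π * r) ^ α * s ^ β = c * r ^ α := by
    rw [Real.mul_rpow (by have := Real.pi_pos; positivity) hr, hc]; ring
  rw [e]
  have hx : 0 ≤ c * r ^ α := by positivity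
  have h1 := ml_decay β _ hβ0 hβ1 hx
  have h0 := ml_nonneg β _ hβ0 hβ1 hx
  have h2 : (1 + r) ^ α ≤ 4 * (1 + r ^ α) := by
    have h4 : (2:ℝ) ^ α ≤ 4 := by
      calc (2:ℝ) ^ α ≤ 2 ^ (2:ℝ) := Real.rpow_le_rpow_of_exponent_le (by norm_num) hα2
        _ = 4 := by norm_num
    have hra : 0 ≤ r ^ α := by positivity
    rcases le_total r 1 with h | h
    · calc (1 + r) ^ α ≤ 2 ^ α := by gcongr; linarith
        _ ≤ _ := by linarith
    · calc (1 + r) ^ α ≤ (2 * r) ^ α := by gcongr; linarith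
        _ = 2 ^ α * r ^ α := Real.mul_rpow (by norm_num) hr
        _ ≤ 4 * r ^ α := by gcongr
        _ ≤ _ := by linarith
  have h3 : 1 + r ^ α ≤ (1 + 1 / c) * (1 + c * r ^ α) := by
    have hra : 0 ≤ r ^ α := by positivity
    have : (1 + 1 / c) * (1 + c * r ^ α) = 1 + r ^ α + (1 / c + c * r ^ α) := by field_simp; ring
    rw [this]
    have : 0 ≤ 1 / c + c * r ^ α := by positivity
    linarith
  have h5 : mittagLeffler β (-(c * r ^ α)) * (1 + r) ^ α ≤ D := by
    calc mittagLeffler β (-(c * r ^ α)) * (1 + r) ^ α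
        ≤ mittagLeffler β (-(c * r ^ α)) * (4 * ((1 + 1 / c) * (1 + c * r ^ α))) := by
          gcongr; linarith
      _ = (mittagLeffler β (-(c * r ^ α)) * (1 + c * r ^ α)) * (4 * (1 + 1 / c)) := by ring
      _ ≤ D := by rw [hD]; gcongr
  have h6 : mittagLeffler β (-(c * r ^ α)) ≤ D * (1 + r) ^ (-α) := by
    rw [Real.rpow_neg (by linarith), ← div_eq_mul_inv, le_div_iff₀ (by positivity)]
    exact h5
  calc (mittagLeffler β (-(c * r ^ α))) ^ 2 ≤ (D * (1 + r) ^ (-α)) ^ 2 := by gcongr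
    _ = D ^ 2 * ((1 + r) ^ (-α)) ^ 2 := by ring
    _ = _ := by
      rw [← Real.rpow_natCast ((1 + r) ^ (-α)), ← Real.rpow_mul (by linarith)]
      congr 2
      push_cast; ring

theorem time_increment_estimate (d : ℕ) (hd : 1 ≤ d) (ν β α : ℝ)
    (hν : 0 < ν) (hβ0 : 0 < β) (hβ1 : β < 1) (hα0 : 0 < α) (hα2 : α ≤ 2)
    (hdα : (d : ℝ) < min 2 β⁻¹ * α)
    (G : ℝ → EuclideanSpace ℝ (Fin d) → ℝ) (Cstar : ℝ)
    (hF : ∀ s > (0 : ℝ), ∀ ξ : EuclideanSpace ℝ (Fin d),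
      (∫ x, Complex.exp (Complex.I * (⟪ξ, x⟫ : ℝ)) * (G s x : ℂ))
        = (mittagLeffler β (-(ν * ‖ξ‖ ^ α * s ^ β)) : ℂ))
    (hL2 : ∀ s > (0 : ℝ), ∫ x, (G s x) ^ 2 = Cstar * s ^ (-(β * d / α)))
    (t t' : ℝ) (ht : 0 ≤ t) (htt' : t ≤ t') (x : EuclideanSpace ℝ (Fin d)) :
    ∫ r in Ioc (0 : ℝ) t, ∫ y, (G (t' - r) (x - y) - G (t - r) (x - y)) ^ 2
      ≤ Cstar / (1 - β * d / α) * (t' - t) ^ (1 - β * d / α) := by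
  have hd2 : (d : ℝ) < 2 * α :=
    lt_of_lt_of_le hdα (mul_le_mul_of_nonneg_right (min_le_left _ _) hα0.le)
  have hdb : (d : ℝ) < β⁻¹ * α :=
    lt_of_lt_of_le hdα (mul_le_mul_of_nonneg_right (min_le_right _ _) hα0.le)
  set a : ℝ := β * d / α with ha
  have ha1 : a < 1 := by
    rw [ha, div_lt_one hα0]
    calc β * d < β * (β⁻¹ * α) := by gcongr
      _ = α := by field_simp
  have ha0 : 0 ≤ a := by positivity
  have hC : 0 ≤ Cstar := by
    have h := hL2 1 one_pos
    simp only [Real.one_rpow, mul_one] at h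
    rw [← h]
    exact integral_nonneg fun x => sq_nonneg _
  -- the multiplier
  set m : ℝ → EuclideanSpace ℝ (Fin d) → ℝ := fun s η =>
    mittagLeffler β (-(ν * (2 * π * ‖η‖) ^ α * s ^ β)) with hm
  have hInt : ∀ s > 0, Integrable (fun x => (G s x : ℂ)) := by
    intro s hs
    by_contra hc
    have h := hF s hs 0
    simp only [inner_zero_left, Complex.ofReal_zero, mul_zero, Complex.exp_zero, one_mul, norm_zero,
      Real.zero_rpow hα0.ne', zero_mul, neg_zero, ml_zero] at h
    rw [integral_undef hc] at h
    simp at h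
  have hFou : ∀ s > 0, FourierTransform.fourier (fun x => (G s x : ℂ))
      = fun η => ((m s η : ℝ) : ℂ) := by
    intro s hs
    rw [fourier_G d (G s) (fun ξ => mittagLeffler β (-(ν * ‖ξ‖ ^ α * s ^ β))) (hF s hs)]
    funext η
    simp only [hm, norm_smul, norm_neg, norm_mul, Real.norm_eq_abs, abs_of_pos Real.pi_pos]
    norm_num
  have hmcont : ∀ s, Continuous (m s) := by
    intro s
    apply (ml_cont β hβ0).comp
    have : Continuous fun η : EuclideanSpace ℝ (Fin d) => (2 * π * ‖η‖) ^ α :=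
      (Real.continuous_rpow_const hα0.le).comp (by fun_prop)
    fun_prop
  have hmsq : ∀ s > 0, Integrable (fun η => (m s η) ^ 2) := by
    intro s hs
    obtain ⟨C, hC0, hCb⟩ := mult_bound β ν α s 0 hβ0 hβ1 hν hα0 hα2 hs
    have hi : Integrable (fun η : EuclideanSpace ℝ (Fin d) => C * (1 + ‖η‖) ^ (-(2 * α))) :=
      (integrable_one_add_norm (by simpa using hd2)).const_mul _
    refine hi.mono' ((hmcont s).pow 2).aestronglyMeasurable ?_
    filter_upwards with η
    rw [Real.norm_of_nonneg (sq_nonneg _)]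
    exact hCb _ (norm_nonneg _)
  have hmL2 : ∀ s > 0, MemLp (m s) 2 := fun s hs =>
    (memLp_two_iff_integrable_sq (hmcont s).aestronglyMeasurable).2 (hmsq s hs)
  have hP : ∀ s > 0, ∫ x, (G s x) ^ 2 = ∫ η, (m s η) ^ 2 := by
    intro s hs
    have h := (planch_aux (fun x => (G s x : ℂ)) (hInt s hs)
      (by rw [hFou s hs]; exact (hmL2 s hs).ofReal)).2
    rw [hFou s hs] at h
    simpa using h
  have hPd : ∀ s > 0, ∀ s' > 0, ∫ x, (G s' x - G s x) ^ 2 = ∫ η, (m s' η - m s η) ^ 2 := by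
    intro s hs s' hs'
    have hI : Integrable (fun x => ((G s' x - G s x : ℝ) : ℂ)) := by
      simpa using! (hInt s' hs').sub (hInt s hs)
    have hE : FourierTransform.fourier (fun x => ((G s' x - G s x : ℝ) : ℂ))
        = fun η => ((m s' η - m s η : ℝ) : ℂ) := by
      funext η
      have h1 := congrFun (hFou s hs) η
      have h2 := congrFun (hFou s' hs') η
      have i1 := (Real.fourierIntegral_convergent_iff (V := EuclideanSpace ℝ (Fin d)) (μ := volume) η).2 (hInt s hs)
      have i2 := (Real.fourierIntegral_convergent_iff (V := EuclideanSpace ℝ (Fin d)) (μ := volume) η).2 (hInt s' hs')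
      rw [Real.fourier_eq] at h1 h2 ⊢
      rw [Complex.ofReal_sub, ← h1, ← h2, ← integral_sub i2 i1]
      congr 1
      funext v
      rw [Complex.ofReal_sub, smul_sub]
    have h := (planch_aux _ hI
      (by rw [hE]; exact ((hmL2 s' hs').sub (hmL2 s hs)).ofReal)).2
    rw [hE] at h
    simp only [Complex.norm_real, Real.norm_eq_abs, sq_abs] at h
    exact h
  have hkey : ∀ s > 0, ∀ s', s ≤ s' →
      ∫ x, (G s' x - G s x) ^ 2 ≤ Cstar * s ^ (-a) - Cstar * s' ^ (-a) := by
    intro s hs s' hss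
    have hs' : 0 < s' := by linarith
    rw [← hL2 s hs, ← hL2 s' hs', hP s hs, hP s' hs', hPd s hs s' hs',
      ← integral_sub (hmsq s hs) (hmsq s' hs')]
    apply integral_mono_of_nonneg
    · exact Filter.Eventually.of_forall fun η => sq_nonneg _
    · exact (hmsq s hs).sub (hmsq s' hs')
    · refine Filter.Eventually.of_forall fun η => ?_
      have hpi := Real.pi_pos
      have hb : (2 * π * ‖η‖) ^ α ≥ 0 := by positivity
      have h0 : 0 ≤ m s' η := ml_nonneg β _ hβ0 hβ1 (by positivity)
      have h1 : m s' η ≤ m s η := ml_anti β _ _ hβ0 hβ1 (by positivity) (by gcongr)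
      simp only
      nlinarith
  rcases ht.eq_or_lt with rfl | htpos
  · simp only [Ioc_self, Measure.restrict_empty, integral_zero_measure, sub_zero]
    have : 0 < 1 - a := by linarith
    have h2 : 0 ≤ t' := htt'
    positivity
  have hi1 : IntegrableOn (fun r => (t - r) ^ (-a)) (Ioc 0 t) := by
    have := beta_integrable 1 (1 - a) t one_pos (by linarith) htpos
    simpa using this
  have hv : ∀ T, t ≤ T → ∫ r in Ioc 0 t, (T - r) ^ (-a) =
      (T ^ (1 - a) - (T - t) ^ (1 - a)) / (1 - a) := by
    intro T hT
    rw [← intervalIntegral.integral_of_le htpos.le,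
      intervalIntegral.integral_comp_sub_left (fun u : ℝ => u ^ (-a)) T,
      integral_rpow (Or.inl (by linarith))]
    simp only [sub_zero]
    rw [show -a + 1 = 1 - a by ring]
  have hi2 : IntegrableOn (fun r => (t' - r) ^ (-a)) (Ioc 0 t) := by
    have h := beta_integrable 1 (1 - a) t' one_pos (by linarith) (by linarith)
    have h : IntegrableOn (fun r => (t' - r) ^ (-a)) (Ioc 0 t') := by simpa using h
    exact h.mono_set (Ioc_subset_Ioc_right htt')
  calc ∫ r in Ioc (0 : ℝ) t, ∫ y, (G (t' - r) (x - y) - G (t - r) (x - y)) ^ 2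
      ≤ ∫ r in Ioc (0 : ℝ) t, (Cstar * (t - r) ^ (-a) - Cstar * (t' - r) ^ (-a)) := by
        apply integral_mono_of_nonneg
        · exact Filter.Eventually.of_forall fun r => integral_nonneg fun y => sq_nonneg _
        · exact (hi1.const_mul _).sub (hi2.const_mul _)
        · rw [← restrict_Ioo_eq_restrict_Ioc]
          filter_upwards [ae_restrict_mem measurableSet_Ioo] with r hr
          rw [integral_sub_left_eq_self (fun y => (G (t' - r) y - G (t - r) y) ^ 2) volume x]
          exact hkey (t - r) (by linarith [hr.2]) (t' - r) (by linarith)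
    _ = Cstar * ((t ^ (1 - a) - (t - t) ^ (1 - a)) / (1 - a)) -
        Cstar * ((t' ^ (1 - a) - (t' - t) ^ (1 - a)) / (1 - a)) := by
        rw [integral_sub (hi1.const_mul _) (hi2.const_mul _), integral_const_mul,
          integral_const_mul, hv t le_rfl, hv t' htt']
    _ = Cstar / (1 - a) * (t' - t) ^ (1 - a) - Cstar / (1 - a) * (t' ^ (1 - a) - t ^ (1 - a)) := by
        rw [sub_self, Real.zero_rpow (by linarith)]
        ring
    _ ≤ _ := by
        have h1 : 0 ≤ Cstar / (1 - a) := div_nonneg hC (by linarith)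
        have h2 : t ^ (1 - a) ≤ t' ^ (1 - a) := by
          apply Real.rpow_le_rpow ht htt' (by linarith)
        nlinarith
end

section
/- Suppose d + 2 < min(2, 1/β)·α. Then for t > 0 and x, x' ∈ ℝ^d, ∫_0^t ∫_{ℝ^d} [G_{t-r}(x'-y) - G_{t-r}(x-y)]² dy dr ≤ C t^{1 - (d+2)β/α} |x'-x|², with explicit constant C = 2π^{d/2} B((d+2)/α, 2-(d+2)/α) ν^{-(d+2)/α} Γ(1+β)^{(d+2)/α} / ((2π)^d Γ(d/2) α (1-(d+2)β/α)). -/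
open MeasureTheory Real Set
open scoped RealInnerProductSpace


/-- The Beta function `B(a,b) = Γ(a)Γ(b)/Γ(a+b)`. -/
noncomputable def betaFn (a b : ℝ) : ℝ := Real.Gamma a * Real.Gamma b / Real.Gamma (a + b)


noncomputable def mlE (β γ x : ℝ) : ℝ := ∑' k : ℕ, x ^ k / Real.Gamma (β * k + γ)

theorem aux_gamma_growth {β s : ℝ} (hβ0 : 0 < β) (hβ1 : β < 1) (hs : β ≤ s) :
    s ^ β / 2 * Gamma s ≤ Gamma (s + β) := by
  have hs0 : 0 < s := by linarith
  have h := Gamma_mul_add_mul_le_rpow_Gamma_mul_rpow_Gamma (s := s + β) (t := s + β + 1)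
    (a := β) (b := 1 - β) (by linarith) (by linarith) hβ0 (by linarith) (by ring)
  have hg : 0 < Gamma (s + β) := Gamma_pos_of_pos (by linarith)
  have hg0 : 0 < Gamma s := Gamma_pos_of_pos (by linarith)
  rw [show β * (s + β) + (1 - β) * (s + β + 1) = s + 1 by ring, Gamma_add_one hs0.ne',
    Gamma_add_one (by linarith), mul_rpow (by linarith) hg.le, mul_left_comm, ← rpow_add hg] at h
  rw [show β + (1 - β) = 1 by ring, rpow_one] at h
  have h2 : (s + β) ^ (1 - β) ≤ 2 * s ^ (1 - β) := by
    calc (s + β) ^ (1 - β) ≤ (2 * s) ^ (1 - β) := by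
          apply rpow_le_rpow <;> linarith
      _ = 2 ^ (1 - β) * s ^ (1 - β) := mul_rpow (by norm_num) hs0.le
      _ ≤ 2 * s ^ (1 - β) := by
          gcongr
          calc (2:ℝ) ^ (1 - β) ≤ 2 ^ (1:ℝ) := rpow_le_rpow_of_exponent_le (by norm_num) (by linarith)
            _ = 2 := rpow_one 2
  have h3 : s * Gamma s ≤ 2 * s ^ (1 - β) * Gamma (s + β) := h.trans (by gcongr)
  have h4 : s = s ^ β * s ^ (1 - β) := by rw [← rpow_add hs0]; simp
  have h5 : 0 < s ^ (1 - β) := by positivity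
  have h6 : s ^ (1 - β) * (s ^ β * Gamma s) ≤ s ^ (1 - β) * (2 * Gamma (s + β)) := by
    calc _ = (s ^ β * s ^ (1 - β)) * Gamma s := by ring
      _ = s * Gamma s := by rw [← h4]
      _ ≤ _ := h3
      _ = _ := by ring
  have := le_of_mul_le_mul_left h6 h5
  linarith

theorem mlE_arg_pos {β γ : ℝ} (hβ0 : 0 < β) (hγ : 0 < γ) (k : ℕ) : 0 < β * k + γ := by positivity

theorem mlE_summable {β γ : ℝ} (hβ0 : 0 < β) (hβ1 : β < 1) (hγ : 0 < γ) (x : ℝ) :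
    Summable (fun k : ℕ => x ^ k / Real.Gamma (β * k + γ)) := by
  apply summable_of_ratio_norm_eventually_le (r := 1 / 2) (by norm_num)
  have h1 : Filter.Tendsto (fun k : ℕ => β * (k:ℝ) + γ) Filter.atTop Filter.atTop :=
    Filter.tendsto_atTop_add_const_right _ _ (tendsto_natCast_atTop_atTop.const_mul_atTop hβ0)
  have h2 := (tendsto_rpow_atTop hβ0).comp h1
  filter_upwards [h2.eventually_ge_atTop (4 * |x|), h1.eventually_ge_atTop β] with k hk hk2
  simp only [Function.comp] at hk
  have hg := aux_gamma_growth hβ0 hβ1 hk2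
  have p1 : 0 < Gamma (β * k + γ) := Gamma_pos_of_pos (mlE_arg_pos hβ0 hγ k)
  have p2 : 0 < Gamma (β * k + γ + β) := Gamma_pos_of_pos (by have := mlE_arg_pos hβ0 hγ k; linarith)
  rw [show β * ((k + 1 : ℕ) : ℝ) + γ = β * k + γ + β by push_cast; ring]
  rw [norm_div, norm_div, norm_pow, norm_pow, Real.norm_of_nonneg p1.le, Real.norm_of_nonneg p2.le,
    Real.norm_eq_abs, ← mul_div_assoc, div_le_div_iff₀ p2 p1, pow_succ]
  have : 2 * |x| * Gamma (β * k + γ) ≤ Gamma (β * k + γ + β) := by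
    refine le_trans ?_ hg
    gcongr; linarith
  have h0 : 0 ≤ |x| ^ k := by positivity
  nlinarith

theorem mlE_continuous {β γ : ℝ} (hβ0 : 0 < β) (hβ1 : β < 1) (hγ : 0 < γ) :
    Continuous (mlE β γ) := by
  rw [continuous_iff_continuousAt]
  intro x
  have : ContinuousOn (mlE β γ) (Metric.ball 0 (|x| + 1)) := by
    apply continuousOn_tsum (u := fun k : ℕ => (|x| + 1) ^ k / Real.Gamma (β * k + γ))
    · intro k; fun_prop
    · exact mlE_summable hβ0 hβ1 hγ _
    · intro k y hy
      have p1 : 0 < Gamma (β * k + γ) := Gamma_pos_of_pos (mlE_arg_pos hβ0 hγ k)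
      rw [norm_div, norm_pow, Real.norm_of_nonneg p1.le]
      simp at hy
      gcongr
      exact hy.le
  exact this.continuousAt (Metric.isOpen_ball.mem_nhds (by simp))

theorem mlE_zero {β γ : ℝ} : mlE β γ 0 = 1 / Gamma γ := by
  rw [mlE, tsum_eq_single 0]
  · simp
  · intro b hb; simp [hb]

theorem mlE_rec {β γ : ℝ} (hβ0 : 0 < β) (hβ1 : β < 1) (hγ : 0 < γ) (x : ℝ) :
    mlE β γ x = 1 / Gamma γ + x * mlE β (γ + β) x := by
  rw [mlE, (mlE_summable hβ0 hβ1 hγ x).tsum_eq_zero_add, mlE, ← tsum_mul_left]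
  congr 1
  · simp
  · congr 1; ext k
    rw [show β * ((k + 1 : ℕ) : ℝ) + γ = β * k + (γ + β) by push_cast; ring]
    ring

theorem real_beta {γ δ t : ℝ} (hγ : 0 < γ) (hδ : 0 < δ) (ht : 0 < t) :
    ∫ s in (0:ℝ)..t, (t - s) ^ (δ - 1) * s ^ (γ - 1) =
      t ^ (γ + δ - 1) * (Gamma γ * Gamma δ / Gamma (γ + δ)) := by
  have h := Complex.betaIntegral_scaled (γ : ℂ) (δ : ℂ) ht
  rw [Complex.betaIntegral_eq_Gamma_mul_div _ _ (by simpa) (by simpa)] at h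
  rw [← Complex.ofReal_inj, ← intervalIntegral.integral_ofReal]
  rw [← Complex.ofReal_add, Complex.Gamma_ofReal, Complex.Gamma_ofReal, Complex.Gamma_ofReal] at h
  push_cast
  rw [Complex.ofReal_cpow ht.le]
  push_cast at h ⊢
  rw [← h]
  apply intervalIntegral.integral_congr
  intro s hs
  rw [uIcc_of_le ht.le] at hs
  simp only
  rw [Complex.ofReal_cpow hs.1, Complex.ofReal_cpow (by linarith [hs.2])]
  push_cast; ring

theorem real_beta_int {γ δ t : ℝ} (hγ : 0 < γ) (hδ : 0 < δ) (ht : 0 < t) :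
    IntervalIntegrable (fun s => (t - s) ^ (δ - 1) * s ^ (γ - 1)) volume 0 t := by
  rw [intervalIntegrable_iff_integrableOn_Ioc_of_le ht.le]
  apply Integrable.of_integral_ne_zero
  rw [← intervalIntegral.integral_of_le ht.le, real_beta hγ hδ ht]
  have := Gamma_pos_of_pos hγ
  have := Gamma_pos_of_pos hδ
  have := Gamma_pos_of_pos (add_pos hγ hδ)
  positivity

theorem mlE_conv_int {β γ δ t : ℝ} (hβ0 : 0 < β) (hβ1 : β < 1) (hγ : 0 < γ) (hδ : 0 < δ) (ht : 0 < t) :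
    IntervalIntegrable (fun s => (t - s) ^ (δ - 1) * (s ^ (γ - 1) * mlE β γ (-s ^ β))) volume 0 t := by
  have := (real_beta_int hγ hδ ht).mul_continuousOn (g := fun s => mlE β γ (-s ^ β)) (by
    apply Continuous.continuousOn
    apply (mlE_continuous hβ0 hβ1 hγ).comp
    exact (continuous_rpow_const hβ0.le).neg)
  refine this.congr ?_
  intro s hs; simp only; ring

theorem mlE_conv {β γ δ t : ℝ} (hβ0 : 0 < β) (hβ1 : β < 1) (hγ : 0 < γ) (hδ : 0 < δ) (ht : 0 < t) :
    ∫ s in (0:ℝ)..t, (t - s) ^ (δ - 1) * (s ^ (γ - 1) * mlE β γ (-s ^ β)) =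
      Gamma δ * (t ^ (γ + δ - 1) * mlE β (γ + δ) (-t ^ β)) := by
  let F : ℕ → ℝ → ℝ := fun k s => (-1) ^ k / Gamma (β * k + γ) * ((t - s) ^ (δ - 1) * s ^ ((β * k + γ) - 1))
  have hFint : ∀ k, Integrable (F k) (volume.restrict (Ioc 0 t)) := by
    intro k
    apply Integrable.const_mul
    have := real_beta_int (mlE_arg_pos hβ0 hγ k) hδ ht
    rwa [intervalIntegrable_iff_integrableOn_Ioc_of_le ht.le] at this
  have hval : ∀ k : ℕ, ∫ s in Ioc 0 t, (t - s) ^ (δ - 1) * s ^ ((β * k + γ) - 1) = Gamma (β * k + γ) *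
      (Gamma δ * t ^ (γ + δ - 1) * ((t ^ β) ^ k / Gamma (β * k + (γ + δ)))) := by
    intro k
    rw [← intervalIntegral.integral_of_le ht.le, real_beta (mlE_arg_pos hβ0 hγ k) hδ ht,
      ← rpow_mul_natCast ht.le, show β * k + γ + δ - 1 = (γ + δ - 1) + β * k by ring, rpow_add ht,
      add_assoc (β * (k:ℝ))]
    ring
  have hne : ∀ k : ℕ, Gamma (β * k + γ) ≠ 0 := fun k => (Gamma_pos_of_pos (mlE_arg_pos hβ0 hγ k)).ne'
  have hnorm : ∀ k : ℕ, ∫ s in Ioc 0 t, ‖F k s‖ = Gamma δ * t ^ (γ + δ - 1) * ((t ^ β) ^ k / Gamma (β * k + (γ + δ))) := by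
    intro k
    have p1 : 0 < Gamma (β * k + γ) := Gamma_pos_of_pos (mlE_arg_pos hβ0 hγ k)
    have : ∫ s in Ioc 0 t, ‖F k s‖ = ∫ s in Ioc 0 t, (1 / Gamma (β * k + γ)) * ((t - s) ^ (δ - 1) * s ^ ((β * k + γ) - 1)) := by
      apply setIntegral_congr_fun measurableSet_Ioc
      intro s hs
      have h1 : 0 ≤ t - s := by linarith [hs.2]
      have h2 : 0 < s := hs.1
      simp only [F]
      rw [norm_mul, norm_div, norm_pow, Real.norm_of_nonneg p1.le,
        Real.norm_of_nonneg (show 0 ≤ (t - s) ^ (δ - 1) * s ^ ((β * k + γ) - 1) by positivity)]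
      simp
    rw [this, integral_const_mul, hval]
    field_simp
  have hsum := hasSum_integral_of_summable_integral_norm hFint (by
    simp_rw [hnorm]
    exact (mlE_summable hβ0 hβ1 (add_pos hγ hδ) _).mul_left _)
  rw [intervalIntegral.integral_of_le ht.le]
  have e1 : ∫ s in Ioc 0 t, (t - s) ^ (δ - 1) * (s ^ (γ - 1) * mlE β γ (-s ^ β)) = ∫ s in Ioc 0 t, ∑' k, F k s := by
    apply setIntegral_congr_fun measurableSet_Ioc
    intro s hs
    have hs0 : 0 < s := hs.1
    simp only [F, mlE]
    rw [← tsum_mul_left, ← tsum_mul_left]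
    congr 1; ext k
    rw [show β * k + γ - 1 = (γ - 1) + β * k by ring, rpow_add hs0, rpow_mul_natCast hs0.le, neg_pow]
    ring
  rw [e1, ← hsum.tsum_eq, mlE, ← tsum_mul_left, ← tsum_mul_left]
  congr 1; ext k
  simp only [F]
  rw [integral_const_mul, hval, neg_pow (t ^ β)]
  have := hne k
  field_simp

theorem volterra_pos_s14 {β K : ℝ} (hβ0 : 0 < β) (hβ1 : β < 1) (hK : 0 < K) (g w : ℝ → ℝ)
    (hc : ContinuousOn w (Ioi 0)) {ε : ℝ} (hε : 0 < ε) (hnear : ∀ t, 0 < t → t ≤ ε → 0 < w t)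
    (hint : ∀ t, 0 < t → IntervalIntegrable (fun s => (t - s) ^ (β - 1) * w s) volume 0 t)
    (heq : ∀ t, 0 < t → w t = g t - K * ∫ s in (0:ℝ)..t, (t - s) ^ (β - 1) * w s)
    (hg : ∀ a b, 0 < a → a ≤ b → (b / a) ^ (β - 1) * g a ≤ g b) (T : ℝ) (hT : 0 < T) : 0 < w T := by
  by_contra hneg
  push Not at hneg
  have hεT : ε < T := by
    by_contra h; push Not at h
    linarith [hnear T hT h]
  have hcI : ContinuousOn w (Icc ε T) := hc.mono fun s hs => lt_of_lt_of_le hε hs.1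
  have hcomp : IsCompact (Icc ε T ∩ w ⁻¹' Iic 0) :=
    (isCompact_Icc).of_isClosed_subset (hcI.preimage_isClosed_of_isClosed isClosed_Icc isClosed_Iic)
      inter_subset_left
  obtain ⟨t0, ⟨ht0I, ht0w⟩, hleast⟩ := hcomp.exists_isLeast ⟨T, ⟨hεT.le, le_rfl⟩, hneg⟩
  have ht0w : w t0 ≤ 0 := ht0w
  have ht0 : 0 < t0 := lt_of_lt_of_le hε ht0I.1
  have hpos : ∀ s, 0 < s → s < t0 → 0 < w s := by
    intro s hs hst
    rcases le_or_gt s ε with h | h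
    · exact hnear s hs h
    · by_contra hw
      push Not at hw
      have := hleast ⟨⟨h.le, hst.le.trans ht0I.2⟩, hw⟩
      linarith
  obtain ⟨δ, hδ, hδK⟩ : ∃ δ : ℝ, 0 < δ ∧ K * (δ ^ β / β) < 1 / 2 := by
    refine ⟨(β / (4 * K)) ^ (1 / β), by positivity, ?_⟩
    rw [← rpow_mul (by positivity), one_div_mul_cancel hβ0.ne', rpow_one]
    field_simp; norm_num
  set t2 := max (t0 / 2) (t0 - δ) with ht2
  have ht2a : t0 / 2 ≤ t2 := le_max_left _ _
  have ht2b : t0 - δ ≤ t2 := le_max_right _ _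
  have ht2c : t2 < t0 := max_lt (by linarith) (by linarith)
  have ht2p : 0 < t2 := by linarith
  obtain ⟨t1, ht1, hmax⟩ := (isCompact_Icc (a := t2) (b := t0)).exists_isMaxOn ⟨t2, le_rfl, ht2c.le⟩
    (hc.mono fun s hs => lt_of_lt_of_le ht2p hs.1)
  have hmax : ∀ s ∈ Icc t2 t0, w s ≤ w t1 := hmax
  have hw1 : 0 < w t1 := (hpos t2 ht2p ht2c).trans_le (hmax t2 ⟨le_rfl, ht2c.le⟩)
  have ht1p : 0 < t1 := by linarith [ht1.1]
  have ht10 : t1 < t0 := lt_of_le_of_ne ht1.2 (by rintro rfl; linarith)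
  set ρ := (t0 / t1) ^ (β - 1) with hρ
  have hρ2 : 1 / 2 ≤ ρ := by
    have h1 : t0 / t1 ≤ 2 := by rw [div_le_iff₀ ht1p]; linarith [ht1.1]
    calc (1:ℝ) / 2 = 2 ^ (-1 : ℝ) := by rw [rpow_neg_one]; norm_num
      _ ≤ 2 ^ (β - 1) := rpow_le_rpow_of_exponent_le (by norm_num) (by linarith)
      _ ≤ ρ := rpow_le_rpow_of_nonpos (by positivity) h1 (by linarith)
  have hi0 := hint t0 ht0
  have hiA : IntervalIntegrable (fun s => (t0 - s) ^ (β - 1) * w s) volume 0 t1 := hi0.mono_set (by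
    rw [uIcc_of_le ht1p.le, uIcc_of_le ht0.le]; exact Icc_subset_Icc_right ht10.le)
  have hiB : IntervalIntegrable (fun s => (t0 - s) ^ (β - 1) * w s) volume t1 t0 := hi0.mono_set (by
    rw [uIcc_of_le ht10.le, uIcc_of_le ht0.le]; exact Icc_subset_Icc_left ht1p.le)
  have hA : ∫ s in (0:ℝ)..t1, (t0 - s) ^ (β - 1) * w s ≤ ρ * ∫ s in (0:ℝ)..t1, (t1 - s) ^ (β - 1) * w s := by
    rw [← intervalIntegral.integral_const_mul]
    apply intervalIntegral.integral_mono_on_of_le_Ioo ht1p.le hiA ((hint t1 ht1p).const_mul _)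
    intro s hs
    rw [← mul_assoc]
    have hws := hpos s hs.1 (hs.2.trans ht10)
    gcongr
    have q1 : 0 < t1 - s := by linarith [hs.2]
    rw [hρ, ← mul_rpow (by positivity) q1.le]
    apply rpow_le_rpow_of_nonpos (by positivity) _ (by linarith)
    rw [div_mul_eq_mul_div, div_le_iff₀ ht1p]
    nlinarith [hs.1]
  have hB0 : ∫ s in t1..t0, (t0 - s) ^ (β - 1) = (t0 - t1) ^ β / β := by
    rw [intervalIntegral.integral_comp_sub_left (fun s => s ^ (β - 1)) t0, integral_rpow (Or.inl (by linarith))]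
    simp [hβ0.ne']
  have hBi : IntervalIntegrable (fun s => (t0 - s) ^ (β - 1)) volume t1 t0 := by
    have := (intervalIntegral.intervalIntegrable_rpow' (a := t0 - t1) (b := 0) (r := β - 1) (by linarith)).comp_sub_left t0
    simpa using this
  have hB : ∫ s in t1..t0, (t0 - s) ^ (β - 1) * w s ≤ (t0 - t1) ^ β / β * w t1 := by
    rw [← hB0, ← intervalIntegral.integral_mul_const]
    apply intervalIntegral.integral_mono_on_of_le_Ioo ht10.le hiB (hBi.mul_const _)
    intro s hs
    have q1 : 0 < t0 - s := by linarith [hs.2]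
    have := hmax s ⟨ht1.1.trans hs.1.le, hs.2.le⟩
    gcongr
  have hδ1 : K * ((t0 - t1) ^ β / β) < 1 / 2 := by
    refine lt_of_le_of_lt ?_ hδK
    have : (t0 - t1) ^ β ≤ δ ^ β := rpow_le_rpow (by linarith) (by linarith [ht1.1]) hβ0.le
    gcongr
  have e0 := heq t0 ht0
  have e1 := heq t1 ht1p
  rw [← intervalIntegral.integral_add_adjacent_intervals hiA hiB] at e0
  have hg1 := hg t1 t0 ht1p ht10.le
  rw [← hρ] at hg1
  have m1 := mul_le_mul_of_nonneg_left hA hK.le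
  have m2 := mul_le_mul_of_nonneg_left hB hK.le
  have m3 : (K * ((t0 - t1) ^ β / β)) * w t1 < 1 / 2 * w t1 := mul_lt_mul_of_pos_right hδ1 hw1
  have m4 : 1 / 2 * w t1 ≤ ρ * w t1 := mul_le_mul_of_nonneg_right hρ2 hw1.le
  have m5 : ρ * w t1 = ρ * g t1 - K * (ρ * ∫ s in (0:ℝ)..t1, (t1 - s) ^ (β - 1) * w s) := by
    rw [e1]; ring
  nlinarith

theorem mlE_volterra {β γ t : ℝ} (hβ0 : 0 < β) (hβ1 : β < 1) (hγ : 0 < γ) (ht : 0 < t) :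
    t ^ (γ - 1) * mlE β γ (-t ^ β) = t ^ (γ - 1) * (1 / Gamma γ) -
      1 / Gamma β * ∫ s in (0:ℝ)..t, (t - s) ^ (β - 1) * (s ^ (γ - 1) * mlE β γ (-s ^ β)) := by
  rw [mlE_conv hβ0 hβ1 hγ hβ0 ht, mlE_rec hβ0 hβ1 hγ,
    show γ + β - 1 = (γ - 1) + β by ring, rpow_add ht]
  have := (Gamma_pos_of_pos hβ0).ne'
  field_simp
  ring

theorem mlE_pos {β γ t : ℝ} (hβ0 : 0 < β) (hβ1 : β < 1) (hγ : β ≤ γ) (ht : 0 < t) :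
    0 < mlE β γ (-t ^ β) := by
  have hγ0 : 0 < γ := by linarith
  have hcont : Continuous fun s : ℝ => mlE β γ (-s ^ β) :=
    (mlE_continuous hβ0 hβ1 hγ0).comp (continuous_rpow_const hβ0.le).neg
  have h0 : 0 < mlE β γ (-(0:ℝ) ^ β) := by
    rw [zero_rpow hβ0.ne', neg_zero, mlE_zero]
    have := Gamma_pos_of_pos hγ0
    positivity
  obtain ⟨ε, hε, hball⟩ := Metric.eventually_nhds_iff.1 (hcont.continuousAt.eventually (lt_mem_nhds h0))
  have h := volterra_pos_s14 (K := 1 / Gamma β) hβ0 hβ1 (by have := Gamma_pos_of_pos hβ0; positivity)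
    (fun t => t ^ (γ - 1) * (1 / Gamma γ)) (fun t => t ^ (γ - 1) * mlE β γ (-t ^ β))
    (by
      apply ContinuousOn.mul _ hcont.continuousOn
      intro s hs
      exact (continuousAt_rpow_const _ _ (Or.inl (ne_of_gt hs))).continuousWithinAt)
    (ε := ε / 2) (by linarith)
    (by
      intro s hs hs2
      have := hball (y := s) (by rw [Real.dist_eq, sub_zero, abs_of_pos hs]; linarith)
      positivity)
    (fun t ht => mlE_conv_int hβ0 hβ1 hγ0 hβ0 ht)
    (fun t ht => mlE_volterra hβ0 hβ1 hγ0 ht)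
    (by
      intro a b ha hab
      have hb : 0 < b := by linarith
      have hG := Gamma_pos_of_pos hγ0
      rw [← mul_assoc]
      gcongr
      have : b ^ (γ - 1) = (b / a) ^ (γ - 1) * a ^ (γ - 1) := by
        rw [← mul_rpow (by positivity) ha.le, div_mul_cancel₀ _ ha.ne']
      rw [this]
      gcongr
      rwa [one_le_div ha])
    t ht
  have hp : 0 < t ^ (γ - 1) := by positivity
  exact (pos_iff_pos_of_mul_pos h).1 hp

theorem mlE_anti {β a b : ℝ} (hβ0 : 0 < β) (hβ1 : β < 1) (ha : 0 < a) (hab : a ≤ b) :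
    mlE β 1 (-b ^ β) ≤ mlE β 1 (-a ^ β) := by
  have key : ∀ t, 0 < t → mlE β 1 (-t ^ β) = 1 - ∫ s in (0:ℝ)..t, (t - s) ^ ((1:ℝ) - 1) * (s ^ (β - 1) * mlE β β (-s ^ β)) := by
    intro t ht
    rw [mlE_conv hβ0 hβ1 hβ0 one_pos ht, mlE_rec hβ0 hβ1 one_pos, Gamma_one, add_comm 1 β]
    simp
    ring
  have hb : 0 < b := by linarith
  rw [key a ha, key b hb]
  have hi := mlE_conv_int hβ0 hβ1 hβ0 one_pos hb
  simp only [sub_self, rpow_zero, one_mul] at hi ⊢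
  have := intervalIntegral.integral_mono_interval (le_refl (0:ℝ)) ha.le hab (by
      filter_upwards [ae_restrict_mem measurableSet_Ioc] with s hs
      have hs0 : 0 < s := hs.1
      have := mlE_pos hβ0 hβ1 le_rfl hs0
      simp only [Pi.zero_apply]
      positivity) hi
  linarith

theorem mlE_bound {β x : ℝ} (hβ0 : 0 < β) (hβ1 : β < 1) (hx : 0 ≤ x) :
    0 ≤ mlE β 1 (-x) ∧ mlE β 1 (-x) ≤ 1 / (1 + x / Gamma (1 + β)) := by
  rcases hx.eq_or_lt with rfl | hx
  · simp [mlE_zero]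
  obtain ⟨t, ht, rfl⟩ : ∃ t : ℝ, 0 < t ∧ t ^ β = x :=
    ⟨x ^ β⁻¹, by positivity, rpow_inv_rpow hx.le hβ0.ne'⟩
  have hp := mlE_pos hβ0 hβ1 hβ1.le ht
  refine ⟨hp.le, ?_⟩
  have hv := mlE_volterra hβ0 hβ1 one_pos ht
  have hi := mlE_conv_int hβ0 hβ1 one_pos hβ0 ht
  simp only [sub_self, rpow_zero, one_mul, Gamma_one, div_one] at hv hi
  have hB0 : ∫ s in (0:ℝ)..t, (t - s) ^ (β - 1) = t ^ β / β := by
    rw [intervalIntegral.integral_comp_sub_left (fun s => s ^ (β - 1)) t, integral_rpow (Or.inl (by linarith))]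
    simp [hβ0.ne']
  have hBi : IntervalIntegrable (fun s => (t - s) ^ (β - 1)) volume 0 t := by
    have := (intervalIntegral.intervalIntegrable_rpow' (a := t) (b := 0) (r := β - 1) (by linarith)).comp_sub_left t
    simpa using this
  have hB : t ^ β / β * mlE β 1 (-t ^ β) ≤ ∫ s in (0:ℝ)..t, (t - s) ^ (β - 1) * mlE β 1 (-s ^ β) := by
    rw [← hB0, ← intervalIntegral.integral_mul_const]
    apply intervalIntegral.integral_mono_on_of_le_Ioo ht.le (hBi.mul_const _) hi
    intro s hs
    have q1 : 0 < t - s := by linarith [hs.2]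
    have := mlE_anti hβ0 hβ1 hs.1 hs.2.le
    gcongr
  have hG := Gamma_pos_of_pos hβ0
  have hG1 : Gamma (1 + β) = β * Gamma β := by rw [add_comm, Gamma_add_one hβ0.ne']
  rw [le_div_iff₀ (by rw [hG1]; positivity), hG1]
  have m := mul_le_mul_of_nonneg_left hB (show 0 ≤ 1 / Gamma β by positivity)
  have e : mlE β 1 (-t ^ β) * (1 + t ^ β / (β * Gamma β)) =
     mlE β 1 (-t ^ β) + 1 / Gamma β * (t ^ β / β * mlE β 1 (-t ^ β)) := by
    field_simp
  rw [e]
  linarith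

open FourierTransform SchwartzMap in
theorem aux_plancherel {d : ℕ} (f : EuclideanSpace ℝ (Fin d) → ℂ) (hf : Integrable f)
    (hf2 : MemLp f 2) : ∫ x, ‖f x‖ ^ 2 = ∫ w, ‖𝓕 f w‖ ^ 2 := by
  set a : Lp ℂ 2 (volume : Measure (EuclideanSpace ℝ (Fin d))) := hf2.toLp f with ha
  have hcont : Continuous (𝓕 f) := VectorFourier.fourierIntegral_continuous Real.continuous_fourierChar
      (by simpa using continuous_inner) hf
  have hae : ∀ᵐ w, (𝓕 a : Lp ℂ 2 (volume : Measure (EuclideanSpace ℝ (Fin d)))) w = 𝓕 f w := by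
    apply ae_eq_of_integral_contDiff_smul_eq
    · exact (Lp.memLp (𝓕 a)).locallyIntegrable (by norm_num)
    · exact hcont.locallyIntegrable
    · intro g hg hgc
      have hgc' : HasCompactSupport (fun x => (g x : ℂ)) := hgc.comp_left (g := fun r : ℝ => (r : ℂ)) (by simp)
      have hg' : ContDiff ℝ (⊤ : ℕ∞) (fun x => (g x : ℂ)) := Complex.ofRealCLM.contDiff.comp hg
      let φ : 𝓢(EuclideanSpace ℝ (Fin d), ℂ) := hgc'.toSchwartzMap hg'
      have h1 := congrArg (fun T => T φ) (Lp.fourier_toTemperedDistribution_eq a)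
      simp only [TemperedDistribution.fourier_apply, Lp.toTemperedDistribution_apply] at h1
      have h2 : ∫ x, (𝓕 φ) x • a x = ∫ x, (𝓕 φ) x • f x := by
        apply integral_congr_ae
        filter_upwards [hf2.coeFn_toLp] with x hx
        rw [ha, hx]
      have h3 := VectorFourier.integral_fourierIntegral_smul_eq_flip (μ := volume) (ν := volume) (f := f) (g := φ) (L := innerₗ (EuclideanSpace ℝ (Fin d)))
        Real.continuous_fourierChar (by simpa using continuous_inner) hf φ.integrable
      have h4 : ∫ x, (𝓕 f) x • φ x = ∫ x, f x • (𝓕 φ) x := by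
        rw [flip_innerₗ] at h3
        exact h3
      have h5 : ∀ x, φ x = (g x : ℂ) := fun x => rfl
      simp only [smul_eq_mul] at *
      simp only [h5] at *
      calc _ = _ := by simp
        _ = _ := h1.symm
        _ = _ := h2
        _ = _ := by simp_rw [mul_comm _ (f _)]; rw [← h4]
        _ = _ := by simp [mul_comm]
  have hn : ∀ b : Lp ℂ 2 (volume : Measure (EuclideanSpace ℝ (Fin d))), ‖b‖ ^ 2 = ∫ x, ‖b x‖ ^ 2 := by
    intro b
    have := L2.inner_def (𝕜 := ℂ) b b
    rw [inner_self_eq_norm_sq_to_K] at this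
    simp only [inner_self_eq_norm_sq_to_K] at this
    norm_cast at this
  have h := hn (𝓕 a)
  rw [Lp.norm_fourier_eq, hn a] at h
  calc _ = ∫ x, ‖a x‖ ^ 2 := by
        apply integral_congr_ae
        filter_upwards [hf2.coeFn_toLp] with x hx
        rw [ha, hx]
    _ = _ := h
    _ = _ := by
        apply integral_congr_ae
        filter_upwards [hae] with x hx
        rw [hx]

theorem aux_inv_sq (b : ℝ) (hb : 0 < b) : ∫ s in Ioi (0:ℝ), s * exp (-(b * s)) = 1 / b ^ 2 := by
  have := integral_rpow_mul_exp_neg_mul_Ioi (a := 2) (r := b) (by norm_num) hb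
  norm_num at this
  simpa using this

theorem aux_radial (q α c : ℝ) (hq : 0 < q) (hα : 0 < α) (hc : 0 < c) (hqα : q < 2 * α) :
    IntegrableOn (fun y => y ^ (q - 1) * (1 / (1 + c * y ^ α) ^ 2)) (Ioi (0:ℝ)) ∧
    ∫ y in Ioi (0:ℝ), y ^ (q - 1) * (1 / (1 + c * y ^ α) ^ 2) =
      c ^ (-q / α) * (1 / α) * (Gamma (q / α) * Gamma (2 - q / α)) := by
  have hqa : q / α < 2 := by rw [div_lt_iff₀ hα]; exact hqα
  have hqa0 : 0 < q / α := by positivity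
  let F : ℝ → ℝ → ℝ := fun s y => s * exp (-s) * (y ^ (q - 1) * exp (-(s * c) * y ^ α))
  have hin : ∀ s ∈ Ioi (0:ℝ), ∫ y in Ioi (0:ℝ), F s y =
      c ^ (-q / α) * (1 / α) * Gamma (q / α) * (s ^ ((2 - q / α) - 1) * exp (-(1 * s))) := by
    intro s hs
    have hs : 0 < s := hs
    simp only [F]
    rw [integral_const_mul, integral_rpow_mul_exp_neg_mul_rpow hα (by linarith) (by positivity)]
    rw [sub_add_cancel, mul_rpow hs.le hc.le]
    have : s ^ ((2 - q / α) - 1) = s * s ^ (-q / α) := by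
      rw [show (2 - q / α) - 1 = 1 + -q / α by ring, rpow_add hs, rpow_one]
    rw [this]; simp only [one_mul]; ring
  have hin2 : ∀ y ∈ Ioi (0:ℝ), ∫ s in Ioi (0:ℝ), F s y = y ^ (q - 1) * (1 / (1 + c * y ^ α) ^ 2) := by
    intro y hy
    have hy : 0 < y := hy
    rw [← aux_inv_sq _ (by positivity), ← integral_const_mul]
    congr 1; ext s
    simp only [F]
    rw [show -((1 + c * y ^ α) * s) = -s + -(s * c) * y ^ α by ring, exp_add]; ring
  have hmeas : AEStronglyMeasurable (Function.uncurry F) ((volume.restrict (Ioi (0:ℝ))).prod (volume.restrict (Ioi (0:ℝ)))) := by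
    apply Measurable.aestronglyMeasurable
    simp only [F, Function.uncurry_def]
    fun_prop
  have hint : Integrable (Function.uncurry F) ((volume.restrict (Ioi (0:ℝ))).prod (volume.restrict (Ioi (0:ℝ)))) := by
    rw [integrable_prod_iff hmeas]
    constructor
    · filter_upwards [ae_restrict_mem measurableSet_Ioi] with s hs
      have hs : 0 < s := hs
      apply Integrable.of_integral_ne_zero
      have := hin s hs
      simp only [Function.uncurry] at *
      rw [this]
      have := Gamma_pos_of_pos hqa0
      positivity
    · have hI : Integrable (fun s => c ^ (-q / α) * (1 / α) * Gamma (q / α) * (s ^ ((2 - q / α) - 1) * exp (-(1 * s)))) (volume.restrict (Ioi (0:ℝ))) := by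
        apply Integrable.const_mul
        apply Integrable.of_integral_ne_zero
        rw [integral_rpow_mul_exp_neg_mul_Ioi (by linarith) one_pos]
        have := Gamma_pos_of_pos (show 0 < 2 - q / α by linarith)
        positivity
      refine hI.congr ?_
      filter_upwards [ae_restrict_mem measurableSet_Ioi] with s hs
      rw [← hin s hs]
      apply setIntegral_congr_fun measurableSet_Ioi
      intro y hy
      have hy : 0 < y := hy
      have hs : 0 < s := hs
      simp only [Function.uncurry, F]
      rw [Real.norm_of_nonneg]
      positivity
  constructor
  · have := hint.integral_prod_right
    refine this.congr ?_
    filter_upwards [ae_restrict_mem measurableSet_Ioi] with y hy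
    exact hin2 y hy
  · rw [← setIntegral_congr_fun measurableSet_Ioi hin2, ← integral_integral_swap hint,
      setIntegral_congr_fun measurableSet_Ioi hin, integral_const_mul,
      integral_rpow_mul_exp_neg_mul_Ioi (by linarith) one_pos]
    simp; ring

theorem mittagLeffler_eq_mlE (β x : ℝ) : mittagLeffler β x = mlE β 1 x := by
  simp only [mittagLeffler, mlE, add_comm]

/-- The spatial Fourier side integral. -/
theorem aux_fourier_side (d : ℕ) (hd : 1 ≤ d) (α c : ℝ) (hα : 0 < α) (hc : 0 < c)
    (hdα : (d : ℝ) + 2 < 2 * α) :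
    Integrable (fun w : EuclideanSpace ℝ (Fin d) =>
      (2 * π * ‖w‖) ^ 2 * (1 / (1 + c * (2 * π * ‖w‖) ^ α) ^ 2)) ∧
    ∫ w : EuclideanSpace ℝ (Fin d), (2 * π * ‖w‖) ^ 2 * (1 / (1 + c * (2 * π * ‖w‖) ^ α) ^ 2) =
      (2 * π ^ ((d : ℝ) / 2) * betaFn (((d : ℝ) + 2) / α) (2 - ((d : ℝ) + 2) / α)
        * c ^ (-((d : ℝ) + 2) / α)) / ((2 * π) ^ (d : ℝ) * Real.Gamma ((d : ℝ) / 2) * α) := by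
  have hd0 : (0:ℝ) < d := by exact_mod_cast hd
  haveI : Nonempty (Fin d) := ⟨⟨0, hd⟩⟩
  haveI : Nontrivial (EuclideanSpace ℝ (Fin d)) := inferInstance
  obtain ⟨hI, hV⟩ := aux_radial ((d:ℝ) + 2) α c (by positivity) hα hc hdα
  let h : ℝ → ℝ := fun r => r ^ 2 * (1 / (1 + c * r ^ α) ^ 2)
  have hpow : ∀ y ∈ Ioi (0:ℝ), y ^ (d - 1) • h y = y ^ ((d:ℝ) + 2 - 1) * (1 / (1 + c * y ^ α) ^ 2) := by
    intro y hy
    have hy : 0 < y := hy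
    simp only [h, smul_eq_mul]
    rw [← mul_assoc, ← pow_add]
    congr 1
    rw [← rpow_natCast]
    congr 1
    have : d - 1 + 2 = d + 1 := by omega
    rw [this]; push_cast; ring
  have hint : Integrable (fun ξ : EuclideanSpace ℝ (Fin d) => h ‖ξ‖) := by
    rw [integrable_fun_norm_addHaar volume (f := h)]
    rw [finrank_euclideanSpace_fin]
    exact (integrableOn_congr_fun hpow measurableSet_Ioi).2 hI
  have hval : ∫ ξ : EuclideanSpace ℝ (Fin d), h ‖ξ‖ = d * (√π ^ d / Gamma (d / 2 + 1)) *
      (c ^ (-((d:ℝ) + 2) / α) * (1 / α) * (Gamma (((d:ℝ) + 2) / α) * Gamma (2 - ((d:ℝ) + 2) / α))) := by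
    rw [integral_fun_norm_addHaar volume h, finrank_euclideanSpace_fin,
      setIntegral_congr_fun measurableSet_Ioi hpow, hV, measureReal_def, EuclideanSpace.volume_ball]
    have : 0 ≤ √π ^ d / Gamma ((d:ℝ) / 2 + 1) := by
      have := Gamma_pos_of_pos (show 0 < (d:ℝ) / 2 + 1 by positivity)
      positivity
    simp [ENNReal.toReal_ofReal this, mul_assoc]
  have hn : ∀ w : EuclideanSpace ℝ (Fin d), (2 * π * ‖w‖) = ‖(2 * π) • w‖ := by
    intro w
    rw [norm_smul, Real.norm_of_nonneg (by positivity)]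
  simp_rw [hn]
  refine ⟨hint.comp_smul (by positivity), ?_⟩
  have := Measure.integral_comp_smul volume (fun ξ : EuclideanSpace ℝ (Fin d) => h ‖ξ‖) (2 * π)
  simp only [h] at this
  rw [this]
  change _ • (∫ ξ : EuclideanSpace ℝ (Fin d), h ‖ξ‖) = _
  rw [hval, finrank_euclideanSpace_fin, abs_of_pos (by positivity), betaFn,
    Gamma_add_one (by positivity), rpow_natCast]
  have e2 : ((d:ℝ) + 2) / α + (2 - ((d:ℝ) + 2) / α) = 2 := by ring
  have e3 : √π ^ d = π ^ ((d:ℝ) / 2) := by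
    rw [sqrt_eq_rpow, ← rpow_mul_natCast pi_pos.le]
    congr 1; ring
  rw [e2, Gamma_two, e3, smul_eq_mul]
  have := Gamma_pos_of_pos (show 0 < (d:ℝ) / 2 by positivity)
  field_simp

open FourierTransform in
theorem aux_fourier_diff {d : ℕ} (g : EuclideanSpace ℝ (Fin d) → ℝ) (hg : Integrable g)
    (m : EuclideanSpace ℝ (Fin d) → ℝ)
    (hF : ∀ ξ : EuclideanSpace ℝ (Fin d),
      (∫ x, Complex.exp (Complex.I * (⟪ξ, x⟫ : ℝ)) * (g x : ℂ)) = (m ξ : ℂ))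
    (x x' w : EuclideanSpace ℝ (Fin d)) :
    ‖𝓕 (fun y => ((g (x' - y) - g (x - y) : ℝ) : ℂ)) w‖ ≤
      (2 * π * ‖w‖) * ‖x' - x‖ * |m ((2 * π) • w)| := by
  have hone : ∀ z : EuclideanSpace ℝ (Fin d),
      (Integrable fun v => Complex.exp (((-2 * π * ⟪v, w⟫ : ℝ) : ℂ) * Complex.I) * (g (z - v) : ℂ)) ∧
      ∫ v, Complex.exp (((-2 * π * ⟪v, w⟫ : ℝ) : ℂ) * Complex.I) * (g (z - v) : ℂ) =
      Complex.exp (Complex.I * ((-2 * π * ⟪z, w⟫ : ℝ) : ℂ)) * (m ((2 * π) • w) : ℂ) := by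
    intro z
    constructor
    · have h1 : Integrable fun v => ((g (z - v) : ℝ) : ℂ) := (hg.comp_sub_left z).ofReal
      refine h1.bdd_mul (c := 1) ?_ ?_
      · exact Continuous.aestronglyMeasurable (by fun_prop)
      · exact Filter.Eventually.of_forall fun v => by rw [Complex.norm_exp_ofReal_mul_I]
    · rw [← integral_sub_left_eq_self _ volume z, ← hF, ← integral_const_mul]
      congr 1; ext u
      rw [sub_sub_cancel, ← mul_assoc, ← Complex.exp_add]
      congr 2
      rw [inner_sub_left, inner_smul_left, real_inner_comm w u]
      simp
      ring
  obtain ⟨i1, v1⟩ := hone x'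
  obtain ⟨i2, v2⟩ := hone x
  have hval : 𝓕 (fun y => ((g (x' - y) - g (x - y) : ℝ) : ℂ)) w =
      (Complex.exp (Complex.I * ((-2 * π * ⟪x', w⟫ : ℝ) : ℂ)) - Complex.exp (Complex.I * ((-2 * π * ⟪x, w⟫ : ℝ) : ℂ)))
        * (m ((2 * π) • w) : ℂ) := by
    rw [Real.fourier_eq', sub_mul, ← v1, ← v2, ← integral_sub i1 i2]
    congr 1; ext v
    simp only [smul_eq_mul]
    push_cast; ring
  rw [hval, norm_mul, Complex.norm_real, Real.norm_eq_abs]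
  gcongr
  have e : Complex.exp (Complex.I * ((-2 * π * ⟪x', w⟫ : ℝ) : ℂ)) - Complex.exp (Complex.I * ((-2 * π * ⟪x, w⟫ : ℝ) : ℂ))
      = Complex.exp (Complex.I * ((-2 * π * ⟪x, w⟫ : ℝ) : ℂ)) * (Complex.exp (Complex.I * ((-2 * π * ⟪x' - x, w⟫ : ℝ) : ℂ)) - 1) := by
    rw [mul_sub, ← Complex.exp_add, mul_one]
    congr 2
    rw [inner_sub_left]; push_cast; ring
  rw [e, norm_mul, mul_comm Complex.I, Complex.norm_exp_ofReal_mul_I, one_mul]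
  refine (Real.norm_exp_I_mul_ofReal_sub_one_le).trans ?_
  rw [norm_mul, norm_mul]
  have := norm_inner_le_norm (𝕜 := ℝ) (x' - x) w
  have e1 : ‖(-2:ℝ)‖ = 2 := by simp
  rw [e1, Real.norm_of_nonneg pi_pos.le]
  calc 2 * π * ‖⟪x' - x, w⟫‖ ≤ 2 * π * (‖x' - x‖ * ‖w‖) := by gcongr
    _ = _ := by ring

open FourierTransform in
theorem aux_fixed_time (d : ℕ) (hd : 1 ≤ d) (ν β α : ℝ)
    (hν : 0 < ν) (hβ0 : 0 < β) (hβ1 : β < 1) (hα0 : 0 < α)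
    (hdα : (d : ℝ) + 2 < 2 * α) (s : ℝ) (hs : 0 < s)
    (g : EuclideanSpace ℝ (Fin d) → ℝ)
    (hF : ∀ ξ : EuclideanSpace ℝ (Fin d),
      (∫ x, Complex.exp (Complex.I * (⟪ξ, x⟫ : ℝ)) * (g x : ℂ))
        = (mittagLeffler β (-(ν * ‖ξ‖ ^ α * s ^ β)) : ℂ))
    (x x' : EuclideanSpace ℝ (Fin d)) :
    ∫ y, (g (x' - y) - g (x - y)) ^ 2 ≤
      (2 * π ^ ((d : ℝ) / 2) * betaFn (((d : ℝ) + 2) / α) (2 - ((d : ℝ) + 2) / α)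
        * (ν * s ^ β / Gamma (1 + β)) ^ (-((d : ℝ) + 2) / α)) /
          ((2 * π) ^ (d : ℝ) * Real.Gamma ((d : ℝ) / 2) * α) * ‖x' - x‖ ^ 2 := by
  have hG : 0 < Gamma (1 + β) := Gamma_pos_of_pos (by linarith)
  set c := ν * s ^ β / Gamma (1 + β) with hc
  have hc0 : 0 < c := by positivity
  obtain ⟨hI, hV⟩ := aux_fourier_side d hd α c hα0 hc0 hdα
  rw [← hV]
  have hgi : Integrable g := by
    have h0 := hF 0
    simp only [inner_zero_left, Complex.ofReal_zero, mul_zero, Complex.exp_zero, one_mul, norm_zero,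
      zero_rpow hα0.ne', zero_mul, neg_zero, mittagLeffler_eq_mlE, mlE_zero, Gamma_one] at h0
    have h1 : Integrable (fun x => (g x : ℂ)) := by
      apply Integrable.of_integral_ne_zero
      rw [h0]; norm_num
    exact h1.re
  have hDi : Integrable (fun y => g (x' - y) - g (x - y)) := (hgi.comp_sub_left x').sub (hgi.comp_sub_left x)
  by_cases hsq : Integrable (fun y => (g (x' - y) - g (x - y)) ^ 2)
  swap
  · rw [integral_undef hsq]
    apply mul_nonneg (integral_nonneg fun w => by positivity) (by positivity)
  have hmem : MemLp (fun y => ((g (x' - y) - g (x - y) : ℝ) : ℂ)) 2 := by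
    rw [memLp_two_iff_integrable_sq_norm hDi.ofReal.aestronglyMeasurable]
    refine hsq.congr (Filter.Eventually.of_forall fun y => ?_)
    simp only [Complex.norm_real, Real.norm_eq_abs, sq_abs]
  have hpl := aux_plancherel _ hDi.ofReal hmem
  have hl : ∫ y, (g (x' - y) - g (x - y)) ^ 2 = ∫ y, ‖((g (x' - y) - g (x - y) : ℝ) : ℂ)‖ ^ 2 := by
    congr 1; ext y
    simp only [Complex.norm_real, Real.norm_eq_abs, sq_abs]
  rw [hl]
  refine hpl.trans_le ?_
  rw [← integral_mul_const]
  apply integral_mono_of_nonneg (Filter.Eventually.of_forall fun w => by positivity) (hI.mul_const _)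
  refine Filter.Eventually.of_forall fun w => ?_
  have hb := aux_fourier_diff g hgi _ hF x x' w
  have hn : ‖(2 * π) • w‖ = 2 * π * ‖w‖ := by
    rw [norm_smul, Real.norm_of_nonneg (by positivity)]
  rw [hn, mittagLeffler_eq_mlE] at hb
  obtain ⟨b1, b2⟩ := mlE_bound (x := ν * (2 * π * ‖w‖) ^ α * s ^ β) hβ0 hβ1 (by positivity)
  rw [abs_of_nonneg b1] at hb
  have e : ν * (2 * π * ‖w‖) ^ α * s ^ β / Gamma (1 + β) = c * (2 * π * ‖w‖) ^ α := by
    rw [hc]; ring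
  rw [e] at b2
  calc _ ≤ ((2 * π * ‖w‖) * ‖x' - x‖ * (1 / (1 + c * (2 * π * ‖w‖) ^ α))) ^ 2 := by
        refine pow_le_pow_left₀ (norm_nonneg _) (hb.trans ?_) 2
        gcongr
    _ = _ := by rw [mul_pow, mul_pow, div_pow]; ring

theorem spatial_increment_upper_estimate (d : ℕ) (hd : 1 ≤ d) (ν β α : ℝ)
    (hν : 0 < ν) (hβ0 : 0 < β) (hβ1 : β < 1) (hα0 : 0 < α) (hα2 : α ≤ 2)
    (hdα : (d : ℝ) + 2 < min 2 β⁻¹ * α)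
    (G : ℝ → EuclideanSpace ℝ (Fin d) → ℝ)
    (hF : ∀ s > (0 : ℝ), ∀ ξ : EuclideanSpace ℝ (Fin d),
      (∫ x, Complex.exp (Complex.I * (⟪ξ, x⟫ : ℝ)) * (G s x : ℂ))
        = (mittagLeffler β (-(ν * ‖ξ‖ ^ α * s ^ β)) : ℂ))
    (t : ℝ) (ht : 0 < t) (x x' : EuclideanSpace ℝ (Fin d)) :
    ∫ r in Ioc (0 : ℝ) t, ∫ y, (G (t - r) (x' - y) - G (t - r) (x - y)) ^ 2
      ≤ (2 * π ^ ((d : ℝ) / 2) * betaFn (((d : ℝ) + 2) / α) (2 - ((d : ℝ) + 2) / α)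
            * ν ^ (-((d : ℝ) + 2) / α) * Real.Gamma (1 + β) ^ (((d : ℝ) + 2) / α))
          / ((2 * π) ^ (d : ℝ) * Real.Gamma ((d : ℝ) / 2) * α * (1 - ((d : ℝ) + 2) * β / α))
          * t ^ (1 - ((d : ℝ) + 2) * β / α) * ‖x' - x‖ ^ 2 := by
  have h2 : (d : ℝ) + 2 < 2 * α := hdα.trans_le (by gcongr; exact min_le_left _ _)
  have h3 : (d : ℝ) + 2 < β⁻¹ * α := hdα.trans_le (by gcongr; exact min_le_right _ _)
  have h4 : ((d : ℝ) + 2) * β / α < 1 := by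
    rw [div_lt_one hα0]
    rw [inv_mul_eq_div, lt_div_iff₀ hβ0] at h3
    exact h3
  have hG : 0 < Gamma (1 + β) := Gamma_pos_of_pos (by linarith)
  set p := ((d : ℝ) + 2) * β / α with hp
  set A := (2 * π ^ ((d : ℝ) / 2) * betaFn (((d : ℝ) + 2) / α) (2 - ((d : ℝ) + 2) / α)
            * ν ^ (-((d : ℝ) + 2) / α) * Real.Gamma (1 + β) ^ (((d : ℝ) + 2) / α))
          / ((2 * π) ^ (d : ℝ) * Real.Gamma ((d : ℝ) / 2) * α) * ‖x' - x‖ ^ 2 with hA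
  have hi : IntervalIntegrable (fun r => (t - r) ^ (-p)) volume 0 t := by
    have := (intervalIntegral.intervalIntegrable_rpow' (a := t) (b := 0) (r := -p) (by linarith)).comp_sub_left t
    simpa using this
  have hv : ∫ r in (0:ℝ)..t, (t - r) ^ (-p) = t ^ (1 - p) / (1 - p) := by
    rw [intervalIntegral.integral_comp_sub_left (fun s => s ^ (-p)) t, integral_rpow (Or.inl (by linarith))]
    rw [sub_self, sub_zero, zero_rpow (by linarith), sub_zero]
    congr 1 <;> ring_nf
  have hfin : ∫ r in Ioc (0:ℝ) t, A * (t - r) ^ (-p) = A * (t ^ (1 - p) / (1 - p)) := by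
    rw [integral_const_mul, ← intervalIntegral.integral_of_le ht.le, hv]
  have hmain : ∫ r in Ioc (0 : ℝ) t, ∫ y, (G (t - r) (x' - y) - G (t - r) (x - y)) ^ 2 ≤
      ∫ r in Ioc (0:ℝ) t, A * (t - r) ^ (-p) := by
    rw [integral_Ioc_eq_integral_Ioo, integral_Ioc_eq_integral_Ioo]
    have hi' : IntegrableOn (fun r => (t - r) ^ (-p)) (Ioo 0 t) := by
      rwa [intervalIntegrable_iff_integrableOn_Ioo_of_le ht.le] at hi
    apply integral_mono_of_nonneg
      (Filter.Eventually.of_forall fun r => integral_nonneg fun y => by positivity) (hi'.const_mul _)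
    filter_upwards [ae_restrict_mem measurableSet_Ioo] with r hr
    have hs : 0 < t - r := by linarith [hr.2]
    refine (aux_fixed_time d hd ν β α hν hβ0 hβ1 hα0 h2 (t - r) hs (G (t - r)) (hF _ hs) x x').trans_eq ?_
    rw [div_rpow (by positivity) hG.le, mul_rpow hν.le (by positivity), ← rpow_mul hs.le, hA,
      show β * (-((d : ℝ) + 2) / α) = -p by rw [hp]; ring,
      neg_div, rpow_neg hG.le, div_inv_eq_mul]
    ring
  refine hmain.trans_eq ?_
  rw [hfin, hA]
  have : (1 - p) ≠ 0 := by linarith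
  have := Gamma_pos_of_pos (show 0 < (d:ℝ) / 2 by positivity)
  field_simp
end
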